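/- (Converse bound for the reliability function.) For any discrete memoryless channel W: X → Y on finite alphabets and 0 ≤ r < I_∞(W), the reliability function satisfies E_rf^{(1+s)}(W,r) ≤ sup_{t≥0} t(r − I_{1+t}(W)) when s ∈ (−1,0], and E_rf^{(1+s)}(W,r) ≤ max{ sup_{t≥s} t(r − I_{1+t}(W)), 0 } when s ∈ (0,∞]. -/

import Mathlib

open scoped ENNReal NNReal BigOperators Classical
open Filter

noncomputable section

namespace RST

/-- Base-2 logarithm `ℝ≥0∞ → EReal`, with `log 0 = ⊥` and `log ⊤ = ⊤`. -/
def elog2 (s : ℝ≥0∞) : EReal :=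
  if s = 0 then ⊥ else if s = ⊤ then ⊤ else ((Real.logb 2 s.toReal : ℝ) : EReal)

/-- Base-2 logarithm `EReal → EReal` (for nonnegative arguments). -/
def eLog2 (x : EReal) : EReal :=
  if x = ⊤ then ⊤ else if x ≤ 0 then ⊥ else ((Real.logb 2 x.toReal : ℝ) : EReal)

/-- Base-2 exponential `EReal → ℝ≥0∞`. -/
def epow2 (x : EReal) : ℝ≥0∞ :=
  if x = ⊤ then ⊤ else if x = ⊥ then 0 else ENNReal.ofReal ((2 : ℝ) ^ x.toReal)

variable {X Y : Type*}

/-- A probability distribution on a finite alphabet, as an `ℝ≥0∞`-valued function. -/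
def IsDist [Fintype X] (P : X → ℝ≥0∞) : Prop := ∑ x, P x = 1

/-- A discrete memoryless channel: every row is a probability distribution. -/
def IsChannel [Fintype X] [Fintype Y] (W : X → Y → ℝ≥0∞) : Prop := ∀ x, ∑ y, W x y = 1

/-- Order-`α` Rényi divergence (base 2), with the order `α ∈ [0,∞]` encoded as `ℝ≥0∞`.
The conventions `0/0 = 0` and `a/0 = ∞` (for `a > 0`, `α > 1`) are built into `ℝ≥0∞`
arithmetic.  The second argument is allowed to be an arbitrary nonnegative vector. -/
def renyiD [Fintype X] (α : ℝ≥0∞) (P Q : X → ℝ≥0∞) : EReal :=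
  if α = 0 then - elog2 (∑ x ∈ Finset.univ.filter fun x => P x ≠ 0, Q x)
  else if α = 1 then ∑ x, ((P x).toReal : EReal) * elog2 (P x / Q x)
  else if α = ⊤ then elog2 (⨆ x, P x / Q x)
  else (((α.toReal - 1)⁻¹ : ℝ) : EReal) *
    elog2 (∑ x, P x ^ α.toReal * Q x ^ (1 - α.toReal))

/-- The `X`-marginal of a joint distribution on `X × Y`. -/
def margX [Fintype X] [Fintype Y] (P : X × Y → ℝ≥0∞) : X → ℝ≥0∞ := fun x => ∑ y, P (x, y)

/-- Order-`α` Rényi mutual information `I_α(X:Y)_P = min_{Q_Y} D_α(P‖P_X × Q_Y)`. -/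
def renyiMI [Fintype X] [Fintype Y] (α : ℝ≥0∞) (P : X × Y → ℝ≥0∞) : EReal :=
  ⨅ Q : {Q : Y → ℝ≥0∞ // IsDist Q}, renyiD α P fun p => margX P p.1 * Q.1 p.2

/-- The joint input-output distribution `P_X · W`. -/
def joint [Fintype X] [Fintype Y] (PX : X → ℝ≥0∞) (W : X → Y → ℝ≥0∞) : X × Y → ℝ≥0∞ :=
  fun p => PX p.1 * W p.1 p.2

/-- Order-`α` Rényi capacity `I_α(W) = max_{P_X} I_α(X:Y)_{P_X · W}`. -/
def renyiCap [Fintype X] [Fintype Y] (α : ℝ≥0∞) (W : X → Y → ℝ≥0∞) : EReal :=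
  ⨆ P : {P : X → ℝ≥0∞ // IsDist P}, renyiMI α (joint P.1 W)

/-- `N` is a simulation of a channel `X → Y` with communication cost at most `c` bits:
shared randomness `K = Fin m` with distribution `PK`, a message set `{1,…,M}` with
`log₂ M ≤ c`, an encoder `E` and a decoder `D`. -/
def IsSimulation [Fintype X] [Fintype Y] (c : ℝ) (N : X → Y → ℝ≥0∞) : Prop :=
  ∃ (m M : ℕ) (PK : Fin m → ℝ≥0∞) (E : X → Fin m → Fin M → ℝ≥0∞)
    (D : Fin M → Fin m → Y → ℝ≥0∞),
    0 < M ∧ Real.logb 2 M ≤ c ∧ (∑ k, PK k = 1) ∧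
    (∀ x k, ∑ j, E x k j = 1) ∧ (∀ j k, ∑ y, D j k y = 1) ∧
    ∀ x y, N x y = ∑ k, ∑ j, PK k * E x k j * D j k y

/-- `D_α(W, N) := max_x D_α(W(·|x) ‖ N(·|x))`. -/
def chD [Fintype X] [Fintype Y] (α : ℝ≥0∞) (W N : X → Y → ℝ≥0∞) : EReal :=
  ⨆ x, renyiD α (W x) (N x)

/-- `𝖣_α(W, c) := min_{N ∈ A(W,c)} D_α(W, N)`. -/
def simD [Fintype X] [Fintype Y] (α : ℝ≥0∞) (W : X → Y → ℝ≥0∞) (c : ℝ) : EReal :=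
  ⨅ N : {N : X → Y → ℝ≥0∞ // IsSimulation c N}, chD α W N.1

/-- The `n`-fold memoryless extension `W^{×n}` of a channel `W`. -/
def prodCh [Fintype X] [Fintype Y] (n : ℕ) (W : X → Y → ℝ≥0∞) :
    (Fin n → X) → (Fin n → Y) → ℝ≥0∞ :=
  fun xs ys => ∏ i, W (xs i) (ys i)

/-- A sequence of communication costs with rate at most `r`. -/
def RateOK (r : ℝ) (c : ℕ → ℝ) : Prop :=
  (∀ n, 0 ≤ c n) ∧ Filter.limsup (fun n : ℕ => ((c n / n : ℝ) : EReal)) Filter.atTop ≤ (r : EReal)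

/-- Reliability function `E_rf^{(α)}(W, r)`. -/
def Erf [Fintype X] [Fintype Y] (α : ℝ≥0∞) (W : X → Y → ℝ≥0∞) (r : ℝ) : EReal :=
  ⨆ c : {c : ℕ → ℝ // RateOK r c},
    Filter.liminf
      (fun n : ℕ => (((-1 : ℝ) / n : ℝ) : EReal) * eLog2 (simD α (prodCh n W) (c.1 n)))
      Filter.atTop

/-- Strong converse exponent `E_sc^{(α)}(W, r)`. -/
def Esc [Fintype X] [Fintype Y] (α : ℝ≥0∞) (W : X → Y → ℝ≥0∞) (r : ℝ) : EReal :=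
  ⨅ c : {c : ℕ → ℝ // RateOK r c},
    Filter.limsup
      (fun n : ℕ => (((1 : ℝ) / n : ℝ) : EReal) * simD α (prodCh n W) (c.1 n))
      Filter.atTop

/-- The `α`-Rényi simulation rate `R_RST^{(α)}(W)`. -/
def Rrst [Fintype X] [Fintype Y] (α : ℝ≥0∞) (W : X → Y → ℝ≥0∞) : EReal :=
  ⨅ c : {c : ℕ → ℝ // (∀ n, 0 ≤ c n) ∧
      Filter.limsup (fun n : ℕ => simD α (prodCh n W) (c n)) Filter.atTop = 0},
    Filter.limsup (fun n : ℕ => ((c.1 n / n : ℝ) : EReal)) Filter.atTop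

/-- n-fold product of a joint distribution on `X × Y`, as a distribution on pairs of
sequences. -/
def prodJoint [Fintype X] [Fintype Y] (n : ℕ) (P : X × Y → ℝ≥0∞) :
    (Fin n → X) × (Fin n → Y) → ℝ≥0∞ :=
  fun p => ∏ i, P (p.1 i, p.2 i)

/-- n-fold product distribution. -/
def prodDist [Fintype X] (n : ℕ) (P : X → ℝ≥0∞) : (Fin n → X) → ℝ≥0∞ :=
  fun xs => ∏ i, P (xs i)

/-- The type (empirical count vector) of a sequence. -/
def seqType [Fintype Y] [DecidableEq Y] {n : ℕ} (ys : Fin n → Y) : Y → ℕ :=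
  fun y => (Finset.univ.filter fun i => ys i = y).card

/-- The cardinality of the type class of a sequence. -/
def typeClassCard [Fintype Y] [DecidableEq Y] {n : ℕ} (ys : Fin n → Y) : ℕ :=
  (Finset.univ.filter fun zs : Fin n → Y => seqType zs = seqType ys).card

/-- The number of types of sequences in `Y^n`. -/
def numTypes (Y : Type*) [Fintype Y] [DecidableEq Y] (n : ℕ) : ℕ :=
  (Finset.univ.image fun ys : Fin n → Y => seqType ys).card

/-- `Φ_{Y^n}`: the uniform mixture over type classes of `Y^n`. -/
def PhiY (Y : Type*) [Fintype Y] [DecidableEq Y] (n : ℕ) : (Fin n → Y) → ℝ≥0∞ :=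
  fun ys => ((numTypes Y n : ℝ≥0∞) * (typeClassCard ys : ℝ≥0∞))⁻¹

end RST

/-!
A simulation of rate `r` satisfies `N(y|x) ≤ 2^{nr} Q(y)` for a single output distribution `Q`,
because a uniform guess of the message is right with probability `2^{-nr}`. Let `R` be a joint
law with information rate `J = E_R log (w / R_Y)` and cost `D = D(R ‖ R_X · w)`. By the law of large
numbers for `R`, some input `x` has `N(·|x) ≤ 2^{-n(J - r)} Wⁿ(·|x)` on a set of `Wⁿ(·|x)`-mass
about `2^{-nD}`. If `J > r`, testing on that set makes the divergence of order `1 + s` at least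
about `min(1, 2^{-n(D - s(J - r))})`, so the exponent is at most the positive part of
`D - s(J - r)` (with `s` replaced by `0` for orders at most one).

It remains to minimize `D - s(J - r)` over the laws with `J > r`. Since `J` is concave and `D` is
convex in `R`, Lagrangian duality reduces this to bounding `D - t(J - r)` for each `t ≥ s`, where
the law obtained by tilting an input distribution as in Sibson's identity has
`t J - D ≥ t I_{1+t}`. The constraint `J > r` is feasible because some law has `J = I_∞(W)`.
-/

namespace RST

section BaseTwoLogs

lemma elog2_ofReal {x : ℝ} (hx : 0 < x) :
    elog2 (ENNReal.ofReal x) = (Real.logb 2 x : ℝ) := by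
  simp [elog2, hx, hx.le]

lemma elog2_mono : Monotone elog2 := by
  intro a b hab
  rcases eq_or_ne a 0 with rfl | ha
  · simp [elog2]
  rcases eq_or_ne b ⊤ with rfl | hb
  · simp [elog2]
  have hb0 : b ≠ 0 := (pos_of_ne_zero ha |>.trans_le hab).ne'
  have ha' : a ≠ ⊤ := ne_top_of_le_ne_top hb hab
  simp only [elog2, ha, ha', hb, hb0, if_false, EReal.coe_le_coe_iff]
  exact Real.logb_le_logb_of_le one_lt_two (ENNReal.toReal_pos ha ha')
    (ENNReal.toReal_mono hb hab)

lemma coe_logb_le_eLog2 {v : ℝ} {x : EReal} (hv : 0 < v) (h : (v : EReal) ≤ x) :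
    (Real.logb 2 v : EReal) ≤ eLog2 x := by
  induction x with
  | bot => simp at h
  | top => simp [eLog2]
  | coe x =>
    have hvx : v ≤ x := EReal.coe_le_coe_iff.1 h
    have hx : ¬ (x : EReal) ≤ 0 := by exact_mod_cast (hv.trans_le hvx).not_ge
    simp only [eLog2, EReal.coe_ne_top, hx, if_false, EReal.toReal_coe, EReal.coe_le_coe_iff]
    exact Real.logb_le_logb_of_le one_lt_two hv hvx

lemma tendsto_two_rpow_neg_mul {κ : ℝ} (hκ : 0 < κ) :
    Tendsto (fun n : ℕ => (2 : ℝ) ^ (-(n * κ))) atTop (nhds 0) :=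
  (tendsto_rpow_atBot_of_base_gt_one 2 one_lt_two).comp
    (tendsto_neg_atTop_atBot.comp (tendsto_natCast_atTop_atTop.atTop_mul_const hκ))

end BaseTwoLogs

section LogSum

lemma sum_mul_logb_div_sum_le {ι : Type*} (s : Finset ι) {b : ℝ} (hb : 1 < b) {u v : ι → ℝ}
    (hu : ∀ i ∈ s, 0 ≤ u i) (hv : ∀ i ∈ s, 0 ≤ v i) (huv : ∀ i ∈ s, v i = 0 → u i = 0) :
    (∑ i ∈ s, u i) * Real.logb b ((∑ i ∈ s, u i) / ∑ i ∈ s, v i) ≤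
      ∑ i ∈ s, u i * Real.logb b (u i / v i) := by
  have hlogb : 0 < Real.log b := Real.log_pos hb
  simp only [Real.logb, ← mul_div_assoc, ← Finset.sum_div]
  refine div_le_div_of_nonneg_right ?_ hlogb.le
  set U := ∑ i ∈ s, u i
  set V := ∑ i ∈ s, v i
  rcases (Finset.sum_nonneg hu).eq_or_lt with hU | hU
  · have hzero : ∀ i ∈ s, u i = 0 := (Finset.sum_eq_zero_iff_of_nonneg hu).1 hU.symm
    rw [show U = 0 from hU.symm, zero_mul,
      Finset.sum_eq_zero fun i hi => by rw [hzero i hi, zero_mul]]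
  have hV : 0 < V := by
    refine (Finset.sum_nonneg hv).lt_of_ne' fun hV => hU.ne' ?_
    exact Finset.sum_eq_zero fun i hi => huv i hi ((Finset.sum_eq_zero_iff_of_nonneg hv).1 hV i hi)
  have term (i) (hi : i ∈ s) :
      u i - v i * (U / V) ≤ u i * Real.log (u i / v i) - u i * Real.log (U / V) := by
    rcases (hu i hi).eq_or_lt with hui | hui
    · rw [← hui]; simpa using mul_nonneg (hv i hi) (div_pos hU hV).le
    have hvi : 0 < v i := (hv i hi).lt_of_ne' fun h => hui.ne' (huv i hi h)
    have hlog := Real.one_sub_inv_le_log_of_pos (div_pos (div_pos hui hvi) (div_pos hU hV))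
    rw [Real.log_div (by positivity) (by positivity)] at hlog
    calc u i - v i * (U / V) = u i * (1 - (u i / v i / (U / V))⁻¹) := by field_simp
      _ ≤ _ := by rw [← mul_sub]; gcongr
  have total := Finset.sum_le_sum term
  rw [Finset.sum_sub_distrib, Finset.sum_sub_distrib, ← Finset.sum_mul, ← Finset.sum_mul] at total
  change U - V * (U / V) ≤ _ - U * _ at total
  rw [mul_div_cancel₀ _ hV.ne', sub_self] at total
  linarith

lemma add_mul_logb_div_le {b : ℝ} (hb : 1 < b) {p q u₁ u₂ v₁ v₂ : ℝ} (hp : 0 ≤ p) (hq : 0 ≤ q)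
    (hu₁ : 0 ≤ u₁) (hu₂ : 0 ≤ u₂) (hv₁ : 0 ≤ v₁) (hv₂ : 0 ≤ v₂)
    (h₁ : v₁ = 0 → u₁ = 0) (h₂ : v₂ = 0 → u₂ = 0) :
    (p * u₁ + q * u₂) * Real.logb b ((p * u₁ + q * u₂) / (p * v₁ + q * v₂)) ≤
      p * (u₁ * Real.logb b (u₁ / v₁)) + q * (u₂ * Real.logb b (u₂ / v₂)) := by
  have scale (c u v : ℝ) :
      c * u * Real.logb b (c * u / (c * v)) = c * (u * Real.logb b (u / v)) := by
    rcases eq_or_ne c 0 with rfl | hc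
    · simp
    · rw [mul_div_mul_left _ _ hc, mul_assoc]
  have := sum_mul_logb_div_sum_le Finset.univ hb (u := ![p * u₁, q * u₂]) (v := ![p * v₁, q * v₂])
    (by simp [Fin.forall_fin_two, mul_nonneg, *]) (by simp [Fin.forall_fin_two, mul_nonneg, *])
    (by simpa [Fin.forall_fin_two] using ⟨fun h => h.imp_right h₁, fun h => h.imp_right h₂⟩)
  simpa only [Fin.sum_univ_two, Matrix.cons_val_zero, Matrix.cons_val_one, scale] using this

end LogSum

section LagrangeDuality

variable {E : Type*} [AddCommGroup E] [Module ℝ E] {C : Set E} {f g : E → ℝ} {e : ℝ}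

lemma cross_mul_nonneg_of_forall_le (hf : ConvexOn ℝ C f) (hg : ConcaveOn ℝ C g)
    (h : ∀ z ∈ C, 0 < g z → e ≤ f z) {x y : E} (hx : x ∈ C) (hy : y ∈ C)
    (hgx : 0 < g x) (hgy : g y ≤ 0) :
    0 ≤ (f x - e) * -g y + (f y - e) * g x := by
  have hε : ∀ ε : ℝ, 0 < ε → 0 ≤ (f x - e) * (-g y + ε) + (f y - e) * g x := by
    intro ε hε
    set a := -g y + ε
    have ha : 0 < a := by simp only [a]; linarith
    have hS : 0 < a + g x := by positivity
    have ha' : 0 ≤ a / (a + g x) := by positivity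
    have hb' : 0 ≤ g x / (a + g x) := by positivity
    have hab : a / (a + g x) + g x / (a + g x) = 1 := by rw [← add_div, div_self hS.ne']
    have hgz := hg.2 hx hy ha' hb' hab
    have hfz := hf.2 hx hy ha' hb' hab
    have hpos : 0 < a / (a + g x) * g x + g x / (a + g x) * g y := by
      have : a / (a + g x) * g x + g x / (a + g x) * g y = ε * g x / (a + g x) := by
        field_simp; simp only [a]; ring
      rw [this]; positivity
    have hez := (h _ (hf.1 hx hy ha' hb' hab) (hpos.trans_le hgz)).trans hfz
    have : (f x - e) * a + (f y - e) * g x =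
        (a + g x) * (a / (a + g x) * f x + g x / (a + g x) * f y - e) := by
      field_simp; ring
    rw [this]
    exact mul_nonneg hS.le (sub_nonneg.2 hez)
  have hlim : Tendsto (fun ε : ℝ => (f x - e) * (-g y + ε) + (f y - e) * g x)
      (nhdsWithin 0 (Set.Ioi 0)) (nhds ((f x - e) * (-g y + 0) + (f y - e) * g x)) :=
    Tendsto.mono_left (Continuous.tendsto (by fun_prop) 0) nhdsWithin_le_nhds
  rw [add_zero] at hlim
  exact ge_of_tendsto hlim (eventually_mem_nhdsWithin.mono hε)

lemma exists_pos_and_lt_of_forall_lagrangian_lt (hf : ConvexOn ℝ C f) (hg : ConcaveOn ℝ C g)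
    (hlag : ∀ τ : ℝ, 0 ≤ τ → ∃ x ∈ C, f x - τ * g x < e) (hpos : ∃ x ∈ C, 0 < g x) :
    ∃ x ∈ C, 0 < g x ∧ f x < e := by
  by_contra! hcon
  obtain ⟨x₀, hx₀, hgx₀⟩ := hpos
  set slopes : Set ℝ := (fun x => (f x - e) / g x) '' {x ∈ C | 0 < g x}
  have slopes_nonneg : ∀ σ ∈ slopes, 0 ≤ σ := by
    rintro _ ⟨x, ⟨hx, hgx⟩, rfl⟩
    exact div_nonneg (sub_nonneg.2 (hcon x hx hgx)) hgx.le
  have slopes_nonempty : slopes.Nonempty := ⟨_, x₀, ⟨hx₀, hgx₀⟩, rfl⟩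
  obtain ⟨y, hy, hlt⟩ := hlag (sInf slopes) (Real.sInf_nonneg slopes_nonneg)
  rcases lt_or_ge 0 (g y) with hgy | hgy
  · have : sInf slopes ≤ (f y - e) / g y := csInf_le ⟨0, slopes_nonneg⟩ ⟨y, ⟨hy, hgy⟩, rfl⟩
    rw [le_div_iff₀ hgy] at this
    linarith
  rcases hgy.eq_or_lt with hgy0 | hgy
  · have := cross_mul_nonneg_of_forall_le hf hg hcon hx₀ hy hgx₀ hgy0.le
    rw [hgy0] at this hlt
    nlinarith
  · have : (e - f y) / -g y ≤ sInf slopes := by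
      refine le_csInf slopes_nonempty ?_
      rintro _ ⟨x, ⟨hx, hgx⟩, rfl⟩
      rw [div_le_div_iff₀ (neg_pos.2 hgy) hgx]
      linarith [cross_mul_nonneg_of_forall_le hf hg hcon hx hy hgx hgy.le]
    rw [div_le_iff₀ (neg_pos.2 hgy)] at this
    linarith

end LagrangeDuality

section JointLaws

variable {X Y : Type*}

/-- The input marginal of a joint law `R`, given as a matrix. -/
def inputMarginal [Fintype Y] (R : X → Y → ℝ) (x : X) : ℝ := ∑ y, R x y

/-- The output marginal of a joint law `R`, given as a matrix. -/
def outputMarginal [Fintype X] (R : X → Y → ℝ) (y : Y) : ℝ := ∑ x, R x y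

lemma outputMarginal_convexComb [Fintype X] (a b : ℝ) (R S : X → Y → ℝ) (y : Y) :
    outputMarginal (a • R + b • S) y = a * outputMarginal R y + b * outputMarginal S y := by
  simp [outputMarginal, Finset.sum_add_distrib, Finset.mul_sum]

lemma inputMarginal_convexComb [Fintype Y] (a b : ℝ) (R S : X → Y → ℝ) (x : X) :
    inputMarginal (a • R + b • S) x = a * inputMarginal R x + b * inputMarginal S x := by
  simp [inputMarginal, Finset.sum_add_distrib, Finset.mul_sum]

variable [Fintype X] [Fintype Y] {w R : X → Y → ℝ}

/-- `R` is a joint law of an input and an output which only charges transitions that are possible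
under the kernel `w`. -/
structure IsJointLaw (w R : X → Y → ℝ) : Prop where
  nonneg (x : X) (y : Y) : 0 ≤ R x y
  sum_eq_one : ∑ x, ∑ y, R x y = 1
  eq_zero_of_eq_zero {x : X} {y : Y} : w x y = 0 → R x y = 0

/-- The mean under `R` of the information density `log (w / R_Y)`: the rate needed to simulate `w`
on the outputs that are typical for `R`. It equals `I(X:Y)_R - D(R ‖ R_X · w)`. -/
def infoRate (w R : X → Y → ℝ) : ℝ :=
  ∑ x, ∑ y, R x y * Real.logb 2 (w x y / outputMarginal R y)

/-- The conditional relative entropy `D(R ‖ R_X · w)`: the exponent of the probability that the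
memoryless channel `w` produces outputs which are typical for `R`. -/
def condDivergence (w R : X → Y → ℝ) : ℝ :=
  ∑ x, ∑ y, R x y * Real.logb 2 (R x y / (inputMarginal R x * w x y))

namespace IsJointLaw

lemma inputMarginal_nonneg (hR : IsJointLaw w R) (x : X) : 0 ≤ inputMarginal R x :=
  Finset.sum_nonneg fun y _ => hR.nonneg x y

lemma outputMarginal_nonneg (hR : IsJointLaw w R) (y : Y) : 0 ≤ outputMarginal R y :=
  Finset.sum_nonneg fun x _ => hR.nonneg x y

lemma sum_inputMarginal (hR : IsJointLaw w R) : ∑ x, inputMarginal R x = 1 := hR.sum_eq_one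

lemma eq_zero_of_inputMarginal_eq_zero (hR : IsJointLaw w R) {x : X}
    (h : inputMarginal R x = 0) (y : Y) : R x y = 0 :=
  (Finset.sum_eq_zero_iff_of_nonneg fun y _ => hR.nonneg x y).1 h y (Finset.mem_univ y)

lemma eq_zero_of_outputMarginal_eq_zero (hR : IsJointLaw w R) {y : Y}
    (h : outputMarginal R y = 0) (x : X) : R x y = 0 :=
  (Finset.sum_eq_zero_iff_of_nonneg fun x _ => hR.nonneg x y).1 h x (Finset.mem_univ x)

lemma infoRate_eq (hR : IsJointLaw w R) :
    infoRate w R = ∑ x, ∑ y, R x y * Real.logb 2 (w x y) -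
      ∑ y, outputMarginal R y * Real.logb 2 (outputMarginal R y) := by
  have term (x : X) (y : Y) : R x y * Real.logb 2 (w x y / outputMarginal R y) =
      R x y * Real.logb 2 (w x y) - R x y * Real.logb 2 (outputMarginal R y) := by
    rcases eq_or_ne (R x y) 0 with h | h
    · simp [h]
    · rw [Real.logb_div (mt hR.eq_zero_of_eq_zero h)
        (mt (hR.eq_zero_of_outputMarginal_eq_zero · x) h), mul_sub]
  simp only [infoRate, term, Finset.sum_sub_distrib]
  rw [Finset.sum_comm (f := fun x y => R x y * Real.logb 2 (outputMarginal R y))]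
  simp only [← Finset.sum_mul, outputMarginal]

end IsJointLaw

lemma convex_setOf_isJointLaw (w : X → Y → ℝ) : Convex ℝ {R | IsJointLaw w R} := by
  intro R hR S hS a b ha hb hab
  refine ⟨fun x y => ?_, ?_, fun {x y} h => ?_⟩
  · exact add_nonneg (mul_nonneg ha (hR.nonneg x y)) (mul_nonneg hb (hS.nonneg x y))
  · simp [Finset.sum_add_distrib, ← Finset.mul_sum, hR.sum_eq_one, hS.sum_eq_one, hab]
  · simp [hR.eq_zero_of_eq_zero h, hS.eq_zero_of_eq_zero h]

lemma concaveOn_infoRate (w : X → Y → ℝ) : ConcaveOn ℝ {R | IsJointLaw w R} (infoRate w) := by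
  refine ⟨convex_setOf_isJointLaw w, fun R hR S hS a b ha hb hab => ?_⟩
  have entropy (y : Y) : outputMarginal (a • R + b • S) y *
      Real.logb 2 (outputMarginal (a • R + b • S) y) ≤
      a * (outputMarginal R y * Real.logb 2 (outputMarginal R y)) +
        b * (outputMarginal S y * Real.logb 2 (outputMarginal S y)) := by
    rw [outputMarginal_convexComb]
    simpa [hab] using add_mul_logb_div_le one_lt_two ha hb (hR.outputMarginal_nonneg y)
      (hS.outputMarginal_nonneg y) zero_le_one zero_le_one (by simp) (by simp)
  have sum_entropy := Finset.sum_le_sum fun y (_ : y ∈ Finset.univ) => entropy y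
  rw [hR.infoRate_eq, hS.infoRate_eq, (convex_setOf_isJointLaw w hR hS ha hb hab).infoRate_eq]
  simp only [Finset.sum_add_distrib, ← Finset.mul_sum] at sum_entropy
  simp only [Pi.add_apply, Pi.smul_apply, smul_eq_mul, add_mul, mul_assoc, Finset.sum_add_distrib,
    ← Finset.mul_sum]
  linarith

lemma convexOn_condDivergence (hw : ∀ x y, 0 ≤ w x y) :
    ConvexOn ℝ {R | IsJointLaw w R} (condDivergence w) := by
  refine ⟨convex_setOf_isJointLaw w, fun R hR S hS a b ha hb _ => ?_⟩
  simp only [condDivergence, smul_eq_mul, Finset.mul_sum, ← Finset.sum_add_distrib]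
  refine Finset.sum_le_sum fun x _ => Finset.sum_le_sum fun y _ => ?_
  have support {T : X → Y → ℝ} (hT : IsJointLaw w T) (h : inputMarginal T x * w x y = 0) :
      T x y = 0 :=
    (mul_eq_zero.1 h).elim (hT.eq_zero_of_inputMarginal_eq_zero · y) hT.eq_zero_of_eq_zero
  rw [inputMarginal_convexComb, add_mul, mul_assoc, mul_assoc]
  exact add_mul_logb_div_le one_lt_two ha hb (hR.nonneg x y) (hS.nonneg x y)
    (mul_nonneg (hR.inputMarginal_nonneg x) (hw x y))
    (mul_nonneg (hS.inputMarginal_nonneg x) (hw x y)) (support hR) (support hS)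

end JointLaws

section Chernoff

lemma exists_sum_mul_rpow_neg_lt_one {ι : Type*} [Fintype ι] {p g : ι → ℝ}
    (hp : ∑ i, p i = 1) (hg : ∀ i, p i ≠ 0 → 0 < g i) (hpos : 0 < ∑ i, p i * Real.log (g i)) :
    ∃ l : ℝ, 0 < l ∧ ∑ i, p i * g i ^ (-l) < 1 := by
  set mgf : ℝ → ℝ := fun l => ∑ i, p i * Real.exp (-l * Real.log (g i))
  have mgf_eq (l : ℝ) : ∑ i, p i * g i ^ (-l) = mgf l := by
    refine Finset.sum_congr rfl fun i _ => ?_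
    rcases eq_or_ne (p i) 0 with h | h
    · simp [h]
    · rw [Real.rpow_def_of_pos (hg i h), mul_comm (Real.log _)]
  have mgf_zero : mgf 0 = 1 := by simp [mgf, hp]
  have hderiv : HasDerivAt mgf (-∑ i, p i * Real.log (g i)) 0 := by
    rw [← Finset.sum_neg_distrib]
    refine HasDerivAt.fun_sum fun i _ => ?_
    simpa using ((((hasDerivAt_id (0 : ℝ)).neg.mul_const (Real.log (g i))).exp).const_mul (p i))
  have hslope := hderiv.tendsto_slope_zero_right.eventually_lt_const (neg_neg_of_pos hpos)
  obtain ⟨l, hneg, hl⟩ := (hslope.and self_mem_nhdsWithin).exists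
  refine ⟨l, hl, ?_⟩
  rw [zero_add, mgf_zero, smul_eq_mul, mul_neg_iff] at hneg
  rw [mgf_eq]
  rcases hneg with ⟨-, h⟩ | ⟨h, -⟩
  · linarith
  · exact absurd (inv_pos.2 hl) h.not_gt

variable {X Y : Type*}

/-- The `n`-fold memoryless extension of a real kernel. -/
def kernelPow (n : ℕ) (f : X → Y → ℝ) (xs : Fin n → X) (ys : Fin n → Y) : ℝ :=
  ∏ i, f (xs i) (ys i)

lemma kernelPow_nonneg {f : X → Y → ℝ} (hf : ∀ x y, 0 ≤ f x y) {n : ℕ} (xs : Fin n → X)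
    (ys : Fin n → Y) : 0 ≤ kernelPow n f xs ys :=
  Finset.prod_nonneg fun i _ => hf (xs i) (ys i)

lemma inputMarginal_kernelPow [Fintype Y] (n : ℕ) (R : X → Y → ℝ) (xs : Fin n → X) :
    inputMarginal (kernelPow n R) xs = ∏ i, inputMarginal R (xs i) := by
  simp only [inputMarginal, kernelPow, Finset.prod_univ_sum, Fintype.piFinset_univ]

lemma outputMarginal_kernelPow [Fintype X] (n : ℕ) (R : X → Y → ℝ) (ys : Fin n → Y) :
    outputMarginal (kernelPow n R) ys = ∏ i, outputMarginal R (ys i) := by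
  simp only [outputMarginal, kernelPow, Finset.prod_univ_sum, Fintype.piFinset_univ]

variable [Fintype X] [Fintype Y] {R f : X → Y → ℝ} {c : ℝ}

lemma sum_sum_kernelPow (n : ℕ) (R : X → Y → ℝ) :
    ∑ xs, ∑ ys, kernelPow n R xs ys = (∑ x, ∑ y, R x y) ^ n := by
  change ∑ xs, inputMarginal (kernelPow n R) xs = (∑ x, inputMarginal R x) ^ n
  simp only [inputMarginal_kernelPow, Finset.sum_pow', Fintype.piFinset_univ]

/-- Markov's inequality for the `(-l)`-th power of `∏ i, f (xs i) (ys i) / 2 ^ c`. -/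
lemma sum_kernelPow_filter_lt_le_pow (hR : ∀ x y, 0 ≤ R x y) (hf : ∀ x y, R x y ≠ 0 → 0 < f x y)
    (c : ℝ) {l : ℝ} (hl : 0 < l) (n : ℕ) :
    ∑ xs, ∑ ys with kernelPow n f xs ys < 2 ^ (n * c), kernelPow n R xs ys ≤
      (∑ x, ∑ y, R x y * (f x y / 2 ^ c) ^ (-l)) ^ n := by
  have hnonneg (x : X) (y : Y) : 0 ≤ R x y * (f x y / 2 ^ c) ^ (-l) := by
    rcases eq_or_ne (R x y) 0 with h | h
    · simp [h]
    · have := hf x y h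
      exact mul_nonneg (hR x y) (by positivity)
  rw [← sum_sum_kernelPow]
  refine Finset.sum_le_sum fun xs _ => ?_
  refine (Finset.sum_le_sum fun ys hys => ?_).trans
    (Finset.sum_le_sum_of_subset_of_nonneg (Finset.filter_subset _ _)
      fun ys _ _ => kernelPow_nonneg hnonneg xs ys)
  rcases eq_or_ne (kernelPow n R xs ys) 0 with h | h
  · exact h ▸ kernelPow_nonneg hnonneg xs ys
  have hpos (i : Fin n) : 0 < f (xs i) (ys i) :=
    hf _ _ (Finset.prod_ne_zero_iff.1 h i (Finset.mem_univ i))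
  have hprod : ∏ i, f (xs i) (ys i) / 2 ^ c = kernelPow n f xs ys / 2 ^ (n * c) := by
    rw [Finset.prod_div_distrib, Finset.prod_const, Finset.card_univ, Fintype.card_fin,
      mul_comm, Real.rpow_mul_natCast zero_le_two]
    rfl
  rw [kernelPow, kernelPow, Finset.prod_mul_distrib,
    Real.finsetProd_rpow _ _ fun i _ => (div_pos (hpos i) (by positivity)).le, hprod]
  refine le_mul_of_one_le_right (kernelPow_nonneg hR xs ys)
    (Real.one_le_rpow_of_pos_of_le_one_of_nonpos ?_ ?_ (neg_nonpos.2 hl.le))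
  · exact div_pos (Finset.prod_pos fun i _ => hpos i) (by positivity)
  · exact (div_le_one (by positivity)).2 (Finset.mem_filter.1 hys).2.le

lemma tendsto_sum_kernelPow_filter_lt (hR : ∀ x y, 0 ≤ R x y) (hR₁ : ∑ x, ∑ y, R x y = 1)
    (hf : ∀ x y, R x y ≠ 0 → 0 < f x y) (hc : c < ∑ x, ∑ y, R x y * Real.logb 2 (f x y)) :
    Tendsto (fun n : ℕ => ∑ xs, ∑ ys with kernelPow n f xs ys < 2 ^ (n * c), kernelPow n R xs ys)
      atTop (nhds 0) := by
  have hlog : 0 < ∑ z : X × Y, R z.1 z.2 * Real.log (f z.1 z.2 / 2 ^ c) := by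
    have term (x : X) (y : Y) : R x y * Real.log (f x y / 2 ^ c) =
        Real.log 2 * (R x y * Real.logb 2 (f x y)) - Real.log 2 * c * R x y := by
      rcases eq_or_ne (R x y) 0 with h | h
      · simp [h]
      · rw [Real.log_div (hf x y h).ne' (by positivity), Real.log_rpow two_pos, Real.logb]
        field_simp
    simp only [Fintype.sum_prod_type, term, Finset.sum_sub_distrib, ← Finset.mul_sum, hR₁]
    nlinarith [Real.log_pos one_lt_two]
  obtain ⟨l, hl, hlt⟩ := exists_sum_mul_rpow_neg_lt_one (p := fun z : X × Y => R z.1 z.2)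
    (by rwa [Fintype.sum_prod_type]) (fun z hz => div_pos (hf z.1 z.2 hz) (by positivity)) hlog
  rw [Fintype.sum_prod_type] at hlt
  have hnonneg : 0 ≤ ∑ x, ∑ y, R x y * (f x y / 2 ^ c) ^ (-l) := by
    simpa using (Finset.sum_nonneg fun xs _ => Finset.sum_nonneg fun ys _ =>
      kernelPow_nonneg hR xs ys).trans (sum_kernelPow_filter_lt_le_pow hR hf c hl 1)
  exact squeeze_zero
    (fun n => Finset.sum_nonneg fun xs _ => Finset.sum_nonneg fun ys _ => kernelPow_nonneg hR xs ys)
    (sum_kernelPow_filter_lt_le_pow hR hf c hl) (tendsto_pow_atTop_nhds_zero_of_lt_one hnonneg hlt)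

end Chernoff

section MetaConverse

variable {X Y : Type*} [Fintype Y]

/-- The `P`-probability that `Q` is smaller than `P` by a factor of `θ`. -/
def ratioMass (θ : ℝ) (P Q : Y → ℝ) : ℝ := ∑ y with Q y ≤ θ * P y, P y

variable [Fintype X]

lemma sum_filter_outputMarginal_lt_le (P : X → Y → ℝ) {Q : Y → ℝ}
    (hQ : ∀ y, 0 ≤ Q y) (hQ₁ : ∑ y, Q y ≤ 1) {b : ℝ} (hb : 0 ≤ b) :
    ∑ x, ∑ y with outputMarginal P y < b * Q y, P x y ≤ b := by
  rw [Finset.sum_comm]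
  calc ∑ y with outputMarginal P y < b * Q y, outputMarginal P y
      ≤ ∑ y with outputMarginal P y < b * Q y, b * Q y :=
        Finset.sum_le_sum fun y hy => (Finset.mem_filter.1 hy).2.le
    _ ≤ ∑ y, b * Q y := Finset.sum_le_sum_of_subset_of_nonneg (Finset.filter_subset _ _)
        fun y _ _ => mul_nonneg hb (hQ y)
    _ ≤ b := by rw [← Finset.mul_sum]; exact mul_le_of_le_one_right hb hQ₁

lemma sum_filter_inputMarginal_mul_le {w P : X → Y → ℝ} (hP : IsJointLaw w P) {N : X → Y → ℝ}
    {θ L : ℝ} (hL : ∀ x, ratioMass θ (w x) (N x) ≤ L) :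
    ∑ x, ∑ y with N x y ≤ θ * w x y, inputMarginal P x * w x y ≤ L := by
  calc ∑ x, ∑ y with N x y ≤ θ * w x y, inputMarginal P x * w x y
      = ∑ x, inputMarginal P x * ratioMass θ (w x) (N x) := by simp only [ratioMass, Finset.mul_sum]
    _ ≤ ∑ x, inputMarginal P x * L := Finset.sum_le_sum fun x _ =>
        mul_le_mul_of_nonneg_left (hL x) (hP.inputMarginal_nonneg x)
    _ = L := by rw [← Finset.sum_mul, hP.sum_inputMarginal, one_mul]

lemma IsJointLaw.atypical_or_rare_or_charged {w P : X → Y → ℝ} (hP : IsJointLaw w P) {x : X} {y : Y}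
    (hxy : 0 < P x y) {N Q M a b d : ℝ} (hM : 0 < M) (ha : 0 < a) (hb : 0 < b) (hd : 0 < d)
    (hN : N ≤ M * Q) :
    w x y / outputMarginal P y < a ∨ inputMarginal P x * w x y / P x y < d ∨
      outputMarginal P y < b * Q ∨
      (N ≤ M / (b * a) * w x y ∧ P x y ≤ inputMarginal P x * w x y / d) := by
  by_contra! h
  obtain ⟨htyp₁, htyp₂, hcommon, hcharged⟩ := h
  have hPY : 0 < outputMarginal P y := (hP.outputMarginal_nonneg y).lt_of_ne'
    fun h => hxy.ne' (hP.eq_zero_of_outputMarginal_eq_zero h x)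
  rw [le_div_iff₀ hPY] at htyp₁
  rw [le_div_iff₀ hxy] at htyp₂
  refine (hcharged ?_).not_ge ((le_div_iff₀ hd).2 (by linarith))
  calc N ≤ M * Q := hN
    _ = M / b * (b * Q) := by field_simp
    _ ≤ M / b * outputMarginal P y := by gcongr
    _ = M / (b * a) * (a * outputMarginal P y) := by field_simp
    _ ≤ M / (b * a) * w x y := by gcongr

/-- The one-shot converse. The pairs where `N x y > M / (b * a) * w x y` are either atypical for
`P`, or have `outputMarginal P y < b * Q y`, an event of probability at most `b`; the remaining
typical pairs are charged to `w` at the cost of a factor `1 / d`. -/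
lemma one_le_atypical_add_ratioMass {w P : X → Y → ℝ} (hw : ∀ x y, 0 ≤ w x y)
    (hP : IsJointLaw w P) {N : X → Y → ℝ} {Q : Y → ℝ} (hQ : ∀ y, 0 ≤ Q y) (hQ₁ : ∑ y, Q y ≤ 1)
    {M a b d L : ℝ} (hM : 0 < M) (ha : 0 < a) (hb : 0 < b) (hd : 0 < d)
    (hN : ∀ x y, N x y ≤ M * Q y) (hL : ∀ x, ratioMass (M / (b * a)) (w x) (N x) ≤ L) :
    1 ≤ (∑ x, ∑ y with w x y / outputMarginal P y < a, P x y) +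
      (∑ x, ∑ y with inputMarginal P x * w x y / P x y < d, P x y) + b + L / d := by
  have split (x : X) (y : Y) : P x y ≤
      (if w x y / outputMarginal P y < a then P x y else 0) +
      (if inputMarginal P x * w x y / P x y < d then P x y else 0) +
      (if outputMarginal P y < b * Q y then P x y else 0) +
      (if N x y ≤ M / (b * a) * w x y then inputMarginal P x * w x y else 0) / d := by
    have hPxy := hP.nonneg x y
    have hdiv : 0 ≤ inputMarginal P x * w x y / d :=
      div_nonneg (mul_nonneg (hP.inputMarginal_nonneg x) (hw x y)) hd.le
    have hzero := zero_div d
    rcases hPxy.eq_or_lt with h | hpos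
    · split_ifs <;> linarith
    rcases hP.atypical_or_rare_or_charged hpos hM ha hb hd (hN x y) with h | h | h | ⟨h, hle⟩ <;>
      rw [if_pos h] <;> split_ifs <;> linarith
  have total := Finset.sum_le_sum fun x (_ : x ∈ Finset.univ) =>
    Finset.sum_le_sum fun y (_ : y ∈ Finset.univ) => split x y
  simp only [Finset.sum_add_distrib, ← Finset.sum_div, ← Finset.sum_filter, hP.sum_eq_one] at total
  have hrare := sum_filter_outputMarginal_lt_le P hQ hQ₁ hb.le
  have hcharged := div_le_div_of_nonneg_right (sum_filter_inputMarginal_mul_le hP hL) hd.le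
  linarith

lemma IsJointLaw.kernelPow {w R : X → Y → ℝ} (hR : IsJointLaw w R) (n : ℕ) :
    IsJointLaw (kernelPow n w) (kernelPow n R) where
  nonneg := kernelPow_nonneg hR.nonneg
  sum_eq_one := by rw [sum_sum_kernelPow, hR.sum_eq_one, one_pow]
  eq_zero_of_eq_zero h := by
    obtain ⟨i, hi, hzero⟩ := Finset.prod_eq_zero_iff.1 h
    exact Finset.prod_eq_zero hi (hR.eq_zero_of_eq_zero hzero)

lemma IsJointLaw.tendsto_atypical_outputs {w R : X → Y → ℝ} (hw : ∀ x y, 0 ≤ w x y)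
    (hR : IsJointLaw w R) {c : ℝ} (hc : c < infoRate w R) :
    Tendsto (fun n : ℕ => ∑ xs, ∑ ys with
      RST.kernelPow n w xs ys / outputMarginal (RST.kernelPow n R) ys < 2 ^ (n * c),
      RST.kernelPow n R xs ys) atTop (nhds 0) := by
  have hpos (x : X) (y : Y) (h : R x y ≠ 0) : 0 < w x y / outputMarginal R y :=
    div_pos ((hw x y).lt_of_ne' (mt hR.eq_zero_of_eq_zero h))
      ((hR.outputMarginal_nonneg y).lt_of_ne' (mt (hR.eq_zero_of_outputMarginal_eq_zero · x) h))
  simpa only [outputMarginal_kernelPow, RST.kernelPow, ← Finset.prod_div_distrib] using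
    tendsto_sum_kernelPow_filter_lt hR.nonneg hR.sum_eq_one hpos hc

lemma IsJointLaw.tendsto_atypical_transitions {w R : X → Y → ℝ} (hw : ∀ x y, 0 ≤ w x y)
    (hR : IsJointLaw w R) {c : ℝ} (hc : c < -condDivergence w R) :
    Tendsto (fun n : ℕ => ∑ xs, ∑ ys with
      inputMarginal (RST.kernelPow n R) xs * RST.kernelPow n w xs ys / RST.kernelPow n R xs ys <
        2 ^ (n * c),
      RST.kernelPow n R xs ys) atTop (nhds 0) := by
  have hpos (x : X) (y : Y) (h : R x y ≠ 0) : 0 < inputMarginal R x * w x y / R x y :=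
    div_pos (mul_pos
      ((hR.inputMarginal_nonneg x).lt_of_ne' (mt (hR.eq_zero_of_inputMarginal_eq_zero · y) h))
      ((hw x y).lt_of_ne' (mt hR.eq_zero_of_eq_zero h))) ((hR.nonneg x y).lt_of_ne' h)
  have hmean : -condDivergence w R =
      ∑ x, ∑ y, R x y * Real.logb 2 (inputMarginal R x * w x y / R x y) := by
    simp only [condDivergence, ← Finset.sum_neg_distrib, ← mul_neg, ← Real.logb_inv, inv_div]
  simpa only [inputMarginal_kernelPow, RST.kernelPow, ← Finset.prod_div_distrib,
    ← Finset.prod_mul_distrib] using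
    tendsto_sum_kernelPow_filter_lt hR.nonneg hR.sum_eq_one hpos (hmean ▸ hc)

lemma IsJointLaw.eventually_exists_le_ratioMass {w R : X → Y → ℝ} (hw : ∀ x y, 0 ≤ w x y)
    (hR : IsJointLaw w R) (r : ℝ) {δ : ℝ} (hδ : 0 < δ) :
    ∀ᶠ n : ℕ in atTop, ∀ (N : (Fin n → X) → (Fin n → Y) → ℝ) (Q : (Fin n → Y) → ℝ),
      (∀ ys, 0 ≤ Q ys) → ∑ ys, Q ys ≤ 1 → (∀ xs ys, N xs ys ≤ 2 ^ (n * (r + δ)) * Q ys) →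
      ∃ xs, 2⁻¹ * 2 ^ (-(n * (condDivergence w R + δ))) ≤
        ratioMass (2 ^ (-(n * (infoRate w R - r - 3 * δ)))) (RST.kernelPow n w xs) (N xs) := by
  have houtputs := hR.tendsto_atypical_outputs hw (sub_lt_self _ hδ)
  have htransitions := hR.tendsto_atypical_transitions hw (sub_lt_self _ hδ)
  have hsmall := ((houtputs.add htransitions).add
    (tendsto_two_rpow_neg_mul hδ)).eventually_lt_const
    (show (0 : ℝ) + 0 + 0 < 2⁻¹ by norm_num)
  filter_upwards [hsmall] with n hn N Q hQ hQ₁ hN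
  by_contra! hcon
  have hθ : (2 : ℝ) ^ (-(n * (infoRate w R - r - 3 * δ))) =
      2 ^ (n * (r + δ)) / (2 ^ (-(n * δ)) * 2 ^ (n * (infoRate w R - δ))) := by
    rw [← Real.rpow_add two_pos, ← Real.rpow_sub two_pos]; ring_nf
  have := one_le_atypical_add_ratioMass (kernelPow_nonneg hw) (hR.kernelPow n) hQ hQ₁
    (d := 2 ^ (n * (-condDivergence w R - δ))) (by positivity) (by positivity) (by positivity)
    (by positivity) hN (fun xs => hθ ▸ (hcon xs).le)
  rw [mul_div_assoc, ← Real.rpow_sub two_pos, show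
    -(n * (condDivergence w R + δ)) - n * (-condDivergence w R - δ) = 0 by ring, Real.rpow_zero]
    at this
  linarith

end MetaConverse

section Simulations

variable {X Y : Type*}

/-- The transition matrix of a channel, with real entries. -/
def toRealKernel (W : X → Y → ℝ≥0∞) (x : X) (y : Y) : ℝ := (W x y).toReal

lemma toRealKernel_nonneg (W : X → Y → ℝ≥0∞) (x : X) (y : Y) : 0 ≤ toRealKernel W x y :=
  ENNReal.toReal_nonneg

variable [Fintype Y]

lemma IsDist.ne_top {P : Y → ℝ≥0∞} (hP : IsDist P) (y : Y) : P y ≠ ⊤ :=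
  ENNReal.sum_ne_top.1 (hP.trans_ne ENNReal.one_ne_top) y (Finset.mem_univ y)

lemma IsDist.sum_toReal {P : Y → ℝ≥0∞} (hP : IsDist P) : ∑ y, (P y).toReal = 1 := by
  rw [← ENNReal.toReal_sum fun y _ => hP.ne_top y, hP, ENNReal.toReal_one]

lemma isDist_ofReal {P : Y → ℝ} (hP : ∀ y, 0 ≤ P y) (hsum : ∑ y, P y = 1) :
    IsDist fun y => ENNReal.ofReal (P y) := by
  rw [IsDist, ← ENNReal.ofReal_sum_of_nonneg fun y _ => hP y, hsum, ENNReal.ofReal_one]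

variable [Fintype X]

lemma toRealKernel_prodCh (n : ℕ) (W : X → Y → ℝ≥0∞) :
    toRealKernel (prodCh n W) = kernelPow n (toRealKernel W) := by
  ext xs ys
  exact ENNReal.toReal_prod _ _

lemma IsChannel.prodCh {W : X → Y → ℝ≥0∞} (hW : IsChannel W) (n : ℕ) :
    IsChannel (prodCh n W) := by
  intro xs
  simp only [RST.prodCh, ← Fintype.piFinset_univ,
    ← Finset.prod_univ_sum (fun _ : Fin n => Finset.univ) fun i y => W (xs i) y, hW _,
    Finset.prod_const_one]

lemma margX_joint {W : X → Y → ℝ≥0∞} (hW : IsChannel W) (P : X → ℝ≥0∞) (x : X) :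
    margX (joint P W) x = P x := by
  simp only [margX, joint, ← Finset.mul_sum, hW x, mul_one]

lemma IsSimulation.isChannel {c : ℝ} {N : X → Y → ℝ≥0∞} (hN : IsSimulation c N) :
    IsChannel N := by
  obtain ⟨m, M, PK, E, D, -, -, hPK, hE, hD, hN⟩ := hN
  intro x
  simp_rw [hN]
  rw [Finset.sum_comm]
  calc ∑ k, ∑ y, ∑ j, PK k * E x k j * D j k y = ∑ k, PK k * ∑ j, E x k j * ∑ y, D j k y := by
        simp only [Finset.mul_sum, mul_assoc]
        exact Finset.sum_congr rfl fun k _ => Finset.sum_comm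
    _ = 1 := by simp only [hD, mul_one, hE, hPK]

/-- Replacing every encoder by the constant `1` bounds `N` by `M` times the output law obtained
from a uniformly random message. -/
lemma IsSimulation.exists_isDist_forall_le {c : ℝ} {N : X → Y → ℝ≥0∞} (hN : IsSimulation c N) :
    ∃ Q, IsDist Q ∧ ∀ x y, N x y ≤ ENNReal.ofReal (2 ^ c) * Q y := by
  obtain ⟨m, M, PK, E, D, hM, hMc, hPK, hE, hD, hN⟩ := hN
  have hM' : (M : ℝ≥0∞) ≠ 0 := by exact_mod_cast hM.ne'
  have hM2 : (M : ℝ≥0∞) ≤ ENNReal.ofReal (2 ^ c) := by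
    rw [← ENNReal.ofReal_natCast]
    exact ENNReal.ofReal_le_ofReal
      ((Real.logb_le_iff_le_rpow one_lt_two (by exact_mod_cast hM)).1 hMc)
  refine ⟨fun y => (M : ℝ≥0∞)⁻¹ * ∑ k, ∑ j, PK k * D j k y, ?_, fun x y => ?_⟩
  · calc ∑ y, (M : ℝ≥0∞)⁻¹ * ∑ k, ∑ j, PK k * D j k y
        = (M : ℝ≥0∞)⁻¹ * ∑ k, PK k * ∑ j, ∑ y, D j k y := by
          rw [← Finset.mul_sum, Finset.sum_comm]
          simp only [Finset.mul_sum]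
          congr! 2 with k
          exact Finset.sum_comm
      _ = 1 := by
          simp only [hD, Finset.sum_const, Finset.card_univ, Fintype.card_fin, nsmul_one,
            ← Finset.sum_mul, hPK, one_mul]
          exact ENNReal.inv_mul_cancel hM' (ENNReal.natCast_ne_top M)
  · calc N x y = ∑ k, ∑ j, PK k * E x k j * D j k y := hN x y
      _ ≤ ∑ k, ∑ j, PK k * D j k y := by
          gcongr with k _ j _
          exact mul_le_of_le_one_right'
            (hE x k ▸ Finset.single_le_sum_of_canonicallyOrdered (Finset.mem_univ j))
      _ = M * ((M : ℝ≥0∞)⁻¹ * ∑ k, ∑ j, PK k * D j k y) := by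
          rw [← mul_assoc, ENNReal.mul_inv_cancel hM' (ENNReal.natCast_ne_top M), one_mul]
      _ ≤ _ := by gcongr

lemma IsJointLaw.eventually_exists_le_ratioMass_of_isSimulation {W : X → Y → ℝ≥0∞}
    {R : X → Y → ℝ} (hR : IsJointLaw (toRealKernel W) R) (r : ℝ) {δ : ℝ} (hδ : 0 < δ) :
    ∀ᶠ n : ℕ in atTop, ∀ c : ℝ, c ≤ n * (r + δ) → ∀ N, IsSimulation c N →
      ∃ xs : Fin n → X, 2⁻¹ * 2 ^ (-(n * (condDivergence (toRealKernel W) R + δ))) ≤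
        ratioMass (2 ^ (-(n * (infoRate (toRealKernel W) R - r - 3 * δ))))
          (toRealKernel (RST.prodCh n W) xs) (toRealKernel N xs) := by
  filter_upwards [hR.eventually_exists_le_ratioMass (toRealKernel_nonneg W) r hδ]
    with n hn c hc N hN
  obtain ⟨Q, hQ, hNQ⟩ := hN.exists_isDist_forall_le
  rw [toRealKernel_prodCh]
  refine hn _ (fun ys => (Q ys).toReal) (fun _ => ENNReal.toReal_nonneg) hQ.sum_toReal.le
    fun xs ys => ?_
  calc toRealKernel N xs ys ≤ (ENNReal.ofReal (2 ^ c) * Q ys).toReal :=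
        ENNReal.toReal_mono (ENNReal.mul_ne_top ENNReal.ofReal_ne_top (hQ.ne_top ys)) (hNQ xs ys)
    _ = 2 ^ c * (Q ys).toReal := by
        rw [ENNReal.toReal_mul, ENNReal.toReal_ofReal (by positivity)]
    _ ≤ 2 ^ (n * (r + δ)) * (Q ys).toReal := by
        gcongr
        exact one_le_two

end Simulations

section PointwiseBounds

variable {v q θ : ℝ}

lemma rpow_mul_rpow_le_sub_indicator {α : ℝ} (h₀ : 0 < α) (h₁ : α < 1) :
    ∃ c, 0 < c ∧ ∀ v q θ : ℝ, 0 ≤ v → 0 ≤ q → θ ≤ 1 / 2 →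
      v ^ α * q ^ (1 - α) ≤ α * v + (1 - α) * q + -c * if q ≤ θ * v then v else 0 := by
  set k : ℝ := (1 / 2) ^ (1 - α)
  have hk : k < (1 + α) / 2 := by
    have := rpow_one_add_lt_one_add_mul_self (s := -1 / 2) (p := 1 - α) (by norm_num) (by norm_num)
      (by linarith) (by linarith)
    norm_num at this
    simp only [k]
    norm_num
    linarith
  refine ⟨(1 + α) / 2 - k, by linarith, fun v q θ hv hq hθ => ?_⟩
  split_ifs with h
  · have hqv : 2 * q ≤ v := by nlinarith
    have hk₁ : 1 / 2 ≤ k :=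
      Real.self_le_rpow_of_le_one (by norm_num) (by norm_num) (by linarith)
    have hamgm := Real.geom_mean_le_arith_mean2_weighted h₀.le (sub_nonneg.2 h₁.le) hv
      (mul_nonneg zero_le_two hq) (by ring)
    calc v ^ α * q ^ (1 - α) = k * (v ^ α * (2 * q) ^ (1 - α)) := by
          rw [mul_left_comm, ← Real.mul_rpow (by norm_num) (by positivity)]
          ring_nf
      _ ≤ k * (α * v + (1 - α) * (2 * q)) := by gcongr
      _ ≤ _ := by
        nlinarith [mul_nonneg (sub_nonneg.2 h₁.le)
          (mul_nonneg (sub_nonneg.2 hk₁) (sub_nonneg.2 hqv))]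
  · simpa using Real.geom_mean_le_arith_mean2_weighted h₀.le (sub_nonneg.2 h₁.le) hv hq (by ring)

lemma sub_le_mul_log_div (hv : 0 < v) (hq : 0 < q) : v - q ≤ v * Real.log (v / q) := by
  calc v - q = v * (1 - (v / q)⁻¹) := by field_simp
    _ ≤ _ := mul_le_mul_of_nonneg_left (Real.one_sub_inv_le_log_of_pos (div_pos hv hq)) hv.le

lemma add_indicator_le_mul_log_div (hv : 0 < v) (hq : 0 < q) (hθ : θ ≤ 1 / 2) :
    1 * v + -1 * q + (Real.log 2 - 1 / 2) * (if q ≤ θ * v then v else 0) ≤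
      v * Real.log (v / q) := by
  split_ifs with h
  · have hqv : 2 * q ≤ v := by nlinarith
    have := sub_le_mul_log_div hv (mul_pos two_pos hq)
    rw [mul_comm 2 q, ← div_div, Real.log_div (by positivity) two_ne_zero, mul_sub] at this
    linarith
  · linarith [sub_le_mul_log_div hv hq]

lemma one_add_mul_sub_mul_le_rpow_mul_rpow {s : ℝ} (hs : 0 ≤ s) (hv : 0 ≤ v) (hq : 0 < q) :
    (1 + s) * v - s * q ≤ v ^ (1 + s) * q ^ (-s) := by
  have bernoulli := one_add_mul_self_le_rpow_one_add (s := v / q - 1) (p := 1 + s)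
    (by linarith [div_nonneg hv hq.le]) (by linarith)
  rw [add_sub_cancel, Real.div_rpow hv hq.le] at bernoulli
  calc (1 + s) * v - s * q = (1 + (1 + s) * (v / q - 1)) * q := by field_simp; ring
    _ ≤ v ^ (1 + s) / q ^ (1 + s) * q := by gcongr
    _ = v ^ (1 + s) * q ^ (-s) := by
      rw [Real.rpow_neg hq.le, Real.rpow_add hq, Real.rpow_one]; field_simp

lemma rpow_neg_mul_le_rpow_mul_rpow {s : ℝ} (hs : 0 ≤ s) (hv : 0 < v) (hq : 0 < q)
    (h : q ≤ θ * v) : θ ^ (-s) * v ≤ v ^ (1 + s) * q ^ (-s) := by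
  calc θ ^ (-s) * v ≤ (q / v) ^ (-s) * v := by
        gcongr ?_ * _
        exact Real.rpow_le_rpow_of_nonpos (div_pos hq hv) ((div_le_iff₀ hv).2 h) (neg_nonpos.2 hs)
    _ = v ^ (1 + s) * q ^ (-s) := by
        rw [Real.div_rpow hq.le hv.le, Real.rpow_add hv, Real.rpow_one, Real.rpow_neg hv.le]
        field_simp

lemma add_indicator_le_rpow_mul_rpow {s : ℝ} (hs : 0 < s) :
    ∃ c, 0 < c ∧ c ≤ 1 ∧ ∀ v q θ : ℝ, 0 ≤ v → 0 ≤ q → (v ≠ 0 → q ≠ 0) → θ ≤ 1 / 2 →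
      (1 + s) * v + -s * q + c * θ ^ (-s) * (if q ≤ θ * v then v else 0) ≤
        v ^ (1 + s) * q ^ (-s) := by
  set k : ℝ := 2 ^ s
  have hk₀ : 0 < k := by positivity
  have hk : 1 + s / 2 < k := by
    simp only [k, Real.rpow_def_of_pos two_pos]
    nlinarith [Real.add_one_le_exp (Real.log 2 * s), Real.log_two_gt_d9]
  have hc : (1 + s / 2) / k < 1 := (div_lt_one hk₀).2 hk
  refine ⟨1 - (1 + s / 2) / k, by linarith, by linarith [show 0 ≤ (1 + s / 2) / k by positivity],
    fun v q θ hv hq hvq hθ => ?_⟩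
  rcases hv.eq_or_lt with rfl | hv₀
  · rw [Real.zero_rpow (by positivity)]
    simpa using mul_nonneg hs.le hq
  have hq₀ : 0 < q := hq.lt_of_ne' (hvq hv₀.ne')
  split_ifs with h
  · have hqv : 2 * q ≤ v := by nlinarith
    set L := v ^ (1 + s) * q ^ (-s) with hL
    have halved : (1 + s) * v - s * (2 * q) ≤ L / k := by
      refine (one_add_mul_sub_mul_le_rpow_mul_rpow hs.le hv (by positivity)).trans_eq ?_
      rw [Real.mul_rpow zero_le_two hq, Real.rpow_neg zero_le_two, hL]
      field_simp
      rfl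
    have hpart := mul_le_mul_of_nonneg_left halved (show 0 ≤ 1 + s / 2 by positivity)
    have hθL := mul_le_mul_of_nonneg_left (rpow_neg_mul_le_rpow_mul_rpow hs.le hv₀ hq₀ h)
      (show 0 ≤ 1 - (1 + s / 2) / k by linarith)
    have : (1 + s) * v - s * q ≤ (1 + s / 2) * ((1 + s) * v - s * (2 * q)) := by
      nlinarith [mul_nonneg (mul_nonneg hs.le (show 0 ≤ 1 + s by linarith)) (sub_nonneg.2 hqv)]
    calc _ ≤ (1 + s / 2) * (L / k) + (1 - (1 + s / 2) / k) * L := by linarith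
      _ = L := by ring
  · linarith [one_add_mul_sub_mul_le_rpow_mul_rpow hs.le hv hq₀]

end PointwiseBounds

section RenyiTestBound

universe u

variable {Y : Type u} [Fintype Y] {P Q : Y → ℝ≥0∞} {θ s : ℝ}

lemma coe_sum_toEReal {ι : Type*} (t : Finset ι) (f : ι → ℝ) :
    ((∑ i ∈ t, f i : ℝ) : EReal) = ∑ i ∈ t, (f i : EReal) :=
  map_sum (⟨⟨Real.toEReal, EReal.coe_zero⟩, EReal.coe_add⟩ : ℝ →+ EReal) f t

lemma min_one_le_logb_two_one_add {z : ℝ} (hz : 0 ≤ z) : min 1 z ≤ Real.logb 2 (1 + z) := by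
  rw [Real.le_logb_iff_rpow_le one_lt_two (by linarith), ← one_add_one_eq_two]
  exact (rpow_one_add_le_one_add_mul_self (s := 1) (by norm_num) (le_min zero_le_one hz)
    (min_le_left _ _)).trans (by linarith [min_le_right 1 z])

lemma IsDist.sum_add_mul_ratioMass (hP : IsDist P) (hQ : IsDist Q) (a b c θ : ℝ) :
    (∑ y, (a * (P y).toReal + b * (Q y).toReal +
      c * if (Q y).toReal ≤ θ * (P y).toReal then (P y).toReal else 0)) =
      a + b + c * ratioMass θ (fun y => (P y).toReal) (fun y => (Q y).toReal) := by
  simp only [Finset.sum_add_distrib, ← Finset.mul_sum, hP.sum_toReal, hQ.sum_toReal, mul_one,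
    ratioMass, Finset.sum_filter]

lemma renyiD_ofReal {a : ℝ} (ha₀ : 0 < a) (ha₁ : a ≠ 1) (P Q : Y → ℝ≥0∞) :
    renyiD (ENNReal.ofReal a) P Q =
      (((a - 1)⁻¹ : ℝ) : EReal) * elog2 (∑ y, P y ^ a * Q y ^ (1 - a)) := by
  simp [renyiD, ha₀, ha₁, ENNReal.toReal_ofReal ha₀.le]

lemma sum_rpow_mul_rpow_eq_ofReal {a b : ℝ} (ha : 0 < a) (hP : ∀ y, P y ≠ ⊤) (hQ : ∀ y, Q y ≠ ⊤)
    (hb : ∀ y, P y ≠ 0 → 0 ≤ b ∨ Q y ≠ 0) :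
    ∑ y, P y ^ a * Q y ^ b = ENNReal.ofReal (∑ y, (P y).toReal ^ a * (Q y).toReal ^ b) := by
  rw [ENNReal.ofReal_sum_of_nonneg fun y _ => by positivity]
  refine Finset.sum_congr rfl fun y _ => ?_
  rw [ENNReal.toReal_rpow, ENNReal.toReal_rpow, ← ENNReal.toReal_mul, ENNReal.ofReal_toReal]
  by_cases hPy : P y = 0
  · simp [hPy, ENNReal.zero_rpow_of_pos ha]
  · refine ENNReal.mul_ne_top (ENNReal.rpow_ne_top_of_nonneg ha.le (hP y)) ?_
    exact (hb y hPy).elim (ENNReal.rpow_ne_top_of_nonneg · (hQ y))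
      (ENNReal.rpow_ne_top_of_ne_zero · (hQ y))

/-- A lower bound on the order-`α` divergence in terms of the mass `μ` that `P` puts on the set
`{Q ≤ θ P}`: wherever `μ > 0`, the divergence is at least `K * min 1 (θ ^ (-s) * μ)`. -/
def RenyiTestBound (α : ℝ≥0∞) (s K : ℝ) (Y : Type*) [Fintype Y] : Prop :=
  ∀ ⦃θ : ℝ⦄ ⦃P Q : Y → ℝ≥0∞⦄, 0 < θ → θ ≤ 1 / 2 → IsDist P → IsDist Q →
    0 < ratioMass θ (fun y => (P y).toReal) (fun y => (Q y).toReal) →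
    ((K * min 1 (θ ^ (-s) * ratioMass θ (fun y => (P y).toReal) (fun y => (Q y).toReal)) : ℝ) :
      EReal) ≤ renyiD α P Q

lemma exists_renyiTestBound_of_lt_one {α : ℝ} (h₀ : 0 < α) (h₁ : α < 1) :
    ∃ K, 0 < K ∧ ∀ (Y : Type u) [Fintype Y], RenyiTestBound (ENNReal.ofReal α) 0 K Y := by
  obtain ⟨c, hc, hpoint⟩ := rpow_mul_rpow_le_sub_indicator h₀ h₁
  have hα : 0 < 1 - α := sub_pos.2 h₁
  refine ⟨(1 - α)⁻¹ * (c / Real.log 2), by positivity, fun Y _ θ P Q _ hθ hP hQ _ => ?_⟩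
  set μ := ratioMass θ (fun y => (P y).toReal) (fun y => (Q y).toReal)
  have affinity : ∑ y, (P y).toReal ^ α * (Q y).toReal ^ (1 - α) ≤
      2 ^ (-(c / Real.log 2 * μ)) := by
    calc _ ≤ ∑ y, (α * (P y).toReal + (1 - α) * (Q y).toReal +
          -c * if (Q y).toReal ≤ θ * (P y).toReal then (P y).toReal else 0) := by
          gcongr with y
          exact hpoint _ _ θ ENNReal.toReal_nonneg ENNReal.toReal_nonneg hθ
      _ = -(c * μ) + 1 := by
          rw [hP.sum_add_mul_ratioMass hQ]; simp only [μ]; ring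
      _ ≤ Real.exp (-(c * μ)) := Real.add_one_le_exp _
      _ = 2 ^ (-(c / Real.log 2 * μ)) := by
          rw [Real.rpow_def_of_pos two_pos]; congr 1; field_simp
  have hlog : elog2 (∑ y, P y ^ α * Q y ^ (1 - α)) ≤ ((-(c / Real.log 2 * μ) : ℝ) : EReal) := by
    rw [sum_rpow_mul_rpow_eq_ofReal h₀ hP.ne_top hQ.ne_top fun _ _ => .inl hα.le]
    refine (elog2_mono (ENNReal.ofReal_le_ofReal affinity)).trans_eq ?_
    rw [elog2_ofReal (by positivity), Real.logb_rpow two_pos one_lt_two.ne']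
  rw [renyiD_ofReal h₀ h₁.ne, show (α - 1)⁻¹ = -(1 - α)⁻¹ by rw [← neg_sub, inv_neg],
    EReal.coe_neg, neg_mul, EReal.le_neg]
  refine (mul_le_mul_of_nonneg_left hlog (EReal.coe_nonneg.2 (inv_nonneg.2 hα.le))).trans ?_
  rw [← EReal.coe_mul, ← EReal.coe_neg, EReal.coe_le_coe_iff, mul_neg, neg_le_neg_iff, neg_zero,
    Real.rpow_zero, one_mul, ← mul_assoc]
  gcongr
  exact min_le_right _ _

lemma coe_mul_logb_div_le_mul_elog2 {p q : ℝ≥0∞} (hp : p ≠ ⊤) (hq : q ≠ ⊤) (hq₀ : q ≠ 0) :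
    ((p.toReal * Real.logb 2 (p.toReal / q.toReal) : ℝ) : EReal) ≤
      (p.toReal : EReal) * elog2 (p / q) := by
  rcases eq_or_ne p 0 with rfl | hp₀
  · simp
  have hp' := ENNReal.toReal_pos hp₀ hp
  have hq' := ENNReal.toReal_pos hq₀ hq
  rw [EReal.coe_mul, ← elog2_ofReal (div_pos hp' hq'), ENNReal.ofReal_div_of_pos hq',
    ENNReal.ofReal_toReal hp, ENNReal.ofReal_toReal hq]

lemma exists_renyiTestBound_one :
    ∃ K, 0 < K ∧ ∀ (Y : Type u) [Fintype Y], RenyiTestBound 1 0 K Y := by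
  have hlog2 : 0 < Real.log 2 := Real.log_pos one_lt_two
  have hc : 0 < Real.log 2 - 1 / 2 := by linarith [Real.log_two_gt_d9]
  refine ⟨(Real.log 2 - 1 / 2) / Real.log 2, by positivity, fun Y _ θ P Q _ hθ hP hQ _ => ?_⟩
  set μ := ratioMass θ (fun y => (P y).toReal) (fun y => (Q y).toReal)
  have hpoint : ∀ y, (((Real.log 2)⁻¹ * (1 * (P y).toReal + -1 * (Q y).toReal +
      (Real.log 2 - 1 / 2) * if (Q y).toReal ≤ θ * (P y).toReal then (P y).toReal else 0) : ℝ) :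
      EReal) ≤ (P y).toReal * elog2 (P y / Q y) := by
    intro y
    rcases eq_or_ne (P y) 0 with hp | hp
    · have := (Q y).toReal_nonneg
      simp only [hp, ENNReal.toReal_zero, EReal.coe_zero, zero_mul]
      exact EReal.coe_nonpos.2 (mul_nonpos_of_nonneg_of_nonpos (by positivity) (by simp))
    have hp' := ENNReal.toReal_pos hp (hP.ne_top y)
    rcases eq_or_ne (Q y) 0 with hq | hq
    · rw [hq, ENNReal.div_zero hp, show elog2 ⊤ = ⊤ by simp [elog2], EReal.coe_mul_top_of_pos hp']
      exact le_top
    refine le_trans ?_ (coe_mul_logb_div_le_mul_elog2 (hP.ne_top y) (hQ.ne_top y) hq)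
    rw [EReal.coe_le_coe_iff, Real.logb, mul_div_assoc', div_eq_inv_mul _ (Real.log 2)]
    gcongr
    exact add_indicator_le_mul_log_div hp' (ENNReal.toReal_pos hq (hQ.ne_top y)) hθ
  calc _ ≤ (((Real.log 2)⁻¹ * (1 + -1 + (Real.log 2 - 1 / 2) * μ) : ℝ) : EReal) := by
        rw [EReal.coe_le_coe_iff, neg_zero, Real.rpow_zero, one_mul, add_neg_cancel, zero_add,
          ← mul_assoc, div_eq_inv_mul]
        gcongr
        exact min_le_right _ _
    _ ≤ ∑ y, ((P y).toReal : EReal) * elog2 (P y / Q y) := by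
        rw [← hP.sum_add_mul_ratioMass hQ, Finset.mul_sum, coe_sum_toEReal]
        exact Finset.sum_le_sum fun y _ => hpoint y
    _ = renyiD 1 P Q := by simp [renyiD]

lemma sum_rpow_mul_rpow_neg_eq_top {y : Y} (hs : 0 < s) (hP : IsDist P) (hPy : P y ≠ 0)
    (hQy : Q y = 0) : ∑ y, P y ^ (1 + s) * Q y ^ (-s) = ⊤ := by
  refine ENNReal.sum_eq_top.2 ⟨y, Finset.mem_univ y, ?_⟩
  rw [hQy, ENNReal.zero_rpow_of_neg (neg_neg_of_pos hs)]
  exact ENNReal.mul_top (by simp [hPy, hP.ne_top y])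

lemma exists_renyiTestBound_of_one_lt (hs : 0 < s) :
    ∃ K, 0 < K ∧ ∀ (Y : Type u) [Fintype Y], RenyiTestBound (ENNReal.ofReal (1 + s)) s K Y := by
  obtain ⟨c, hc₀, hc₁, hpoint⟩ := add_indicator_le_rpow_mul_rpow hs
  refine ⟨s⁻¹ * c, by positivity, fun Y _ θ P Q hθ₀ hθ hP hQ hμ => ?_⟩
  set μ := ratioMass θ (fun y => (P y).toReal) (fun y => (Q y).toReal)
  rw [renyiD_ofReal (by linarith) (by linarith), add_sub_cancel_left, sub_add_cancel_left,
    mul_assoc, EReal.coe_mul]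
  refine mul_le_mul_of_nonneg_left ?_ (EReal.coe_nonneg.2 (inv_nonneg.2 hs.le))
  by_cases hac : ∀ y, P y ≠ 0 → Q y ≠ 0
  · rw [sum_rpow_mul_rpow_eq_ofReal (by linarith) hP.ne_top hQ.ne_top fun y hy => .inr (hac y hy)]
    calc ((c * min 1 (θ ^ (-s) * μ) : ℝ) : EReal)
        ≤ (Real.logb 2 (1 + c * (θ ^ (-s) * μ)) : ℝ) := by
          refine EReal.coe_le_coe_iff.2 (le_trans ?_ (min_one_le_logb_two_one_add (by positivity)))
          rw [mul_min_of_nonneg _ _ hc₀.le, mul_one]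
          exact min_le_min_right _ hc₁
      _ = elog2 (ENNReal.ofReal (1 + c * (θ ^ (-s) * μ))) := (elog2_ofReal (by positivity)).symm
      _ = elog2 (ENNReal.ofReal (∑ y, ((1 + s) * (P y).toReal + -s * (Q y).toReal +
            c * θ ^ (-s) * if (Q y).toReal ≤ θ * (P y).toReal then (P y).toReal else 0))) := by
          rw [hP.sum_add_mul_ratioMass hQ, ← sub_eq_add_neg, add_sub_cancel_right, mul_assoc]
      _ ≤ _ := by
          refine elog2_mono (ENNReal.ofReal_le_ofReal (Finset.sum_le_sum fun y _ => ?_))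
          refine hpoint _ _ θ ENNReal.toReal_nonneg ENNReal.toReal_nonneg (fun hp => ?_) hθ
          exact ENNReal.toReal_ne_zero.2
            ⟨hac y (ENNReal.toReal_ne_zero.1 hp).1, hQ.ne_top y⟩
  · push Not at hac
    obtain ⟨y, hPy, hQy⟩ := hac
    rw [sum_rpow_mul_rpow_neg_eq_top hs hP hPy hQy]
    simp [elog2]

lemma renyiTestBound_top (s : ℝ) : RenyiTestBound ⊤ s 1 Y := by
  intro θ P Q _ hθ hP hQ hμ
  obtain ⟨y, hy, hPy⟩ := Finset.exists_ne_zero_of_sum_ne_zero hμ.ne'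
  have hPy₀ : P y ≠ 0 := (ENNReal.toReal_ne_zero.1 hPy).1
  have hratio : 2 ≤ P y / Q y := by
    rw [ENNReal.le_div_iff_mul_le (.inr hPy₀) (.inl (hQ.ne_top y)),
      ← ENNReal.toReal_le_toReal (ENNReal.mul_ne_top ENNReal.ofNat_ne_top (hQ.ne_top y))
        (hP.ne_top y), ENNReal.toReal_mul, ENNReal.toReal_ofNat]
    nlinarith [(Finset.mem_filter.1 hy).2, (P y).toReal_nonneg]
  calc _ ≤ ((1 : ℝ) : EReal) := EReal.coe_le_coe_iff.2 (by simp)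
    _ = elog2 (ENNReal.ofReal 2) := by
        rw [elog2_ofReal two_pos, Real.logb_self_eq_one one_lt_two]
    _ ≤ elog2 (⨆ y, P y / Q y) :=
        elog2_mono (ENNReal.ofReal_ofNat 2 ▸ hratio.trans (le_iSup (fun y => P y / Q y) y))
    _ = renyiD ⊤ P Q := by simp [renyiD]

end RenyiTestBound

section TiltedLaw

variable {X Y : Type*} [Fintype X] {p : X → ℝ} {w : X → Y → ℝ} {t : ℝ}

/-- The unnormalized output distribution attaining the minimum in the definition of the Rényi
mutual information of order `1 + t` (Sibson's identity). -/
def tiltedOutput (t : ℝ) (p : X → ℝ) (w : X → Y → ℝ) (y : Y) : ℝ :=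
  (∑ x, p x * w x y ^ (1 + t)) ^ (1 + t)⁻¹

lemma tiltedOutput_nonneg (hp : ∀ x, 0 ≤ p x) (hw : ∀ x y, 0 ≤ w x y) (y : Y) :
    0 ≤ tiltedOutput t p w y :=
  Real.rpow_nonneg (Finset.sum_nonneg fun x _ =>
    mul_nonneg (hp x) (Real.rpow_nonneg (hw x y) _)) _

lemma tiltedOutput_pos (hp : ∀ x, 0 ≤ p x) (hw : ∀ x y, 0 ≤ w x y) {x : X} {y : Y}
    (hpx : p x ≠ 0) (hwxy : w x y ≠ 0) : 0 < tiltedOutput t p w y := by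
  refine Real.rpow_pos_of_pos (Finset.sum_pos' (fun x _ => ?_) ⟨x, Finset.mem_univ x, ?_⟩) _
  · exact mul_nonneg (hp x) (Real.rpow_nonneg (hw x y) _)
  · exact mul_pos ((hp x).lt_of_ne' hpx) (Real.rpow_pos_of_pos ((hw x y).lt_of_ne' hwxy) _)

lemma sum_mul_rpow_mul_tiltedOutput_rpow_neg (ht : 0 ≤ t) (hp : ∀ x, 0 ≤ p x)
    (hw : ∀ x y, 0 ≤ w x y) (y : Y) :
    ∑ x, p x * w x y ^ (1 + t) * tiltedOutput t p w y ^ (-t) = tiltedOutput t p w y := by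
  have ht' : 0 < 1 + t := by linarith
  have hsum : 0 ≤ ∑ x, p x * w x y ^ (1 + t) :=
    Finset.sum_nonneg fun x _ => mul_nonneg (hp x) (Real.rpow_nonneg (hw x y) _)
  have hpow : ∑ x, p x * w x y ^ (1 + t) = tiltedOutput t p w y ^ (1 + t) :=
    (Real.rpow_inv_rpow hsum ht'.ne').symm
  rw [← Finset.sum_mul, hpow]
  rcases (tiltedOutput_nonneg hp hw y).eq_or_lt with h | h
  · rw [← h, Real.zero_rpow ht'.ne', zero_mul]
  · rw [← Real.rpow_add h, add_neg_cancel_right, Real.rpow_one]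

variable [Fintype Y]

/-- The normalization of `tiltedOutput`. -/
def tiltedMass (t : ℝ) (p : X → ℝ) (w : X → Y → ℝ) : ℝ := ∑ y, tiltedOutput t p w y

/-- The joint law whose trade-off between `infoRate` and `condDivergence` certifies the Rényi
mutual information of order `1 + t`. -/
def tiltedLaw (t : ℝ) (p : X → ℝ) (w : X → Y → ℝ) (x : X) (y : Y) : ℝ :=
  p x * w x y ^ (1 + t) * tiltedOutput t p w y ^ (-t) / tiltedMass t p w

lemma tiltedMass_pos (hp : ∀ x, 0 ≤ p x) (hw : ∀ x y, 0 ≤ w x y) (hpsum : ∑ x, p x = 1)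
    (hwsum : ∀ x, ∑ y, w x y = 1) : 0 < tiltedMass t p w := by
  obtain ⟨x, -, hx⟩ := Finset.exists_ne_zero_of_sum_ne_zero (hpsum.trans_ne one_ne_zero)
  obtain ⟨y, -, hy⟩ := Finset.exists_ne_zero_of_sum_ne_zero ((hwsum x).trans_ne one_ne_zero)
  exact Finset.sum_pos' (fun y _ => tiltedOutput_nonneg hp hw y)
    ⟨y, Finset.mem_univ y, tiltedOutput_pos hp hw hx hy⟩

lemma outputMarginal_tiltedLaw (ht : 0 ≤ t) (hp : ∀ x, 0 ≤ p x) (hw : ∀ x y, 0 ≤ w x y) (y : Y) :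
    outputMarginal (tiltedLaw t p w) y = tiltedOutput t p w y / tiltedMass t p w := by
  simp only [outputMarginal, tiltedLaw]
  rw [← Finset.sum_div, sum_mul_rpow_mul_tiltedOutput_rpow_neg ht hp hw]

lemma isJointLaw_tiltedLaw (ht : 0 ≤ t) (hp : ∀ x, 0 ≤ p x) (hw : ∀ x y, 0 ≤ w x y)
    (hmass : 0 < tiltedMass t p w) : IsJointLaw w (tiltedLaw t p w) where
  nonneg x y := div_nonneg (mul_nonneg (mul_nonneg (hp x) (Real.rpow_nonneg (hw x y) _))
    (Real.rpow_nonneg (tiltedOutput_nonneg hp hw y) _)) hmass.le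
  sum_eq_one := by
    rw [Finset.sum_comm]
    change ∑ y, outputMarginal (tiltedLaw t p w) y = 1
    simp only [outputMarginal_tiltedLaw ht hp hw, ← Finset.sum_div]
    exact div_self hmass.ne'
  eq_zero_of_eq_zero h := by simp [tiltedLaw, h, Real.zero_rpow (by linarith : 1 + t ≠ 0)]

lemma logb_tiltedMass_eq {x : X} {y : Y} (ht : 0 ≤ t) (hp : ∀ x, 0 ≤ p x)
    (hw : ∀ x y, 0 ≤ w x y) (hmass : 0 < tiltedMass t p w) {m : ℝ} (hm : m ≠ 0)
    (hR : tiltedLaw t p w x y ≠ 0) :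
    (1 + t) * Real.logb 2 (tiltedMass t p w) + Real.logb 2 (m / p x) =
      t * Real.logb 2 (w x y / outputMarginal (tiltedLaw t p w) y) -
        Real.logb 2 (tiltedLaw t p w x y / (m * w x y)) := by
  have hpx : p x ≠ 0 := fun h => hR (by simp [tiltedLaw, h])
  have hwxy : w x y ≠ 0 := mt (isJointLaw_tiltedLaw ht hp hw hmass).eq_zero_of_eq_zero hR
  have hu := tiltedOutput_pos (t := t) hp hw hpx hwxy
  have hw₀ := (hw x y).lt_of_ne' hwxy
  rw [outputMarginal_tiltedLaw ht hp hw, Real.logb_div hm hpx,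
    Real.logb_div hwxy (by positivity), Real.logb_div hu.ne' hmass.ne', Real.logb_div hR
    (by positivity), Real.logb_mul hm hwxy, tiltedLaw, Real.logb_div (by positivity) hmass.ne',
    Real.logb_mul (by positivity) (by positivity), Real.logb_mul hpx (by positivity),
    Real.logb_rpow_eq_mul_logb_of_pos hw₀, Real.logb_rpow_eq_mul_logb_of_pos hu]
  ring

lemma sum_inputMarginal_tiltedLaw_mul_logb_nonneg (ht : 0 ≤ t) (hp : ∀ x, 0 ≤ p x)
    (hw : ∀ x y, 0 ≤ w x y) (hpsum : ∑ x, p x = 1) (hmass : 0 < tiltedMass t p w) :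
    0 ≤ ∑ x, inputMarginal (tiltedLaw t p w) x *
      Real.logb 2 (inputMarginal (tiltedLaw t p w) x / p x) := by
  have hR := isJointLaw_tiltedLaw ht hp hw hmass
  refine le_of_eq_of_le ?_ (sum_mul_logb_div_sum_le Finset.univ one_lt_two
    (fun x _ => hR.inputMarginal_nonneg x) (fun x _ => hp x) fun x _ h => ?_)
  · simp [hR.sum_inputMarginal, hpsum]
  · simp [inputMarginal, tiltedLaw, h]

lemma one_add_mul_logb_tiltedMass_le (ht : 0 ≤ t) (hp : ∀ x, 0 ≤ p x) (hw : ∀ x y, 0 ≤ w x y)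
    (hpsum : ∑ x, p x = 1) (hmass : 0 < tiltedMass t p w) :
    (1 + t) * Real.logb 2 (tiltedMass t p w) ≤
      t * infoRate w (tiltedLaw t p w) - condDivergence w (tiltedLaw t p w) := by
  have hR := isJointLaw_tiltedLaw ht hp hw hmass
  have term (x : X) (y : Y) : tiltedLaw t p w x y * ((1 + t) * Real.logb 2 (tiltedMass t p w) +
      Real.logb 2 (inputMarginal (tiltedLaw t p w) x / p x)) =
      t * (tiltedLaw t p w x y *
        Real.logb 2 (w x y / outputMarginal (tiltedLaw t p w) y)) -
      tiltedLaw t p w x y * Real.logb 2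
        (tiltedLaw t p w x y / (inputMarginal (tiltedLaw t p w) x * w x y)) := by
    rcases eq_or_ne (tiltedLaw t p w x y) 0 with h | h
    · simp [h]
    · rw [logb_tiltedMass_eq ht hp hw hmass
        (mt (hR.eq_zero_of_inputMarginal_eq_zero · y) h) h]
      ring
  calc _ ≤ (1 + t) * Real.logb 2 (tiltedMass t p w) +
        ∑ x, inputMarginal (tiltedLaw t p w) x *
          Real.logb 2 (inputMarginal (tiltedLaw t p w) x / p x) :=
        le_add_of_nonneg_right
          (sum_inputMarginal_tiltedLaw_mul_logb_nonneg ht hp hw hpsum hmass)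
    _ = ∑ x, ∑ y, tiltedLaw t p w x y * ((1 + t) * Real.logb 2 (tiltedMass t p w) +
          Real.logb 2 (inputMarginal (tiltedLaw t p w) x / p x)) := by
        simp only [mul_add, Finset.sum_add_distrib, ← Finset.sum_mul, hR.sum_eq_one, one_mul,
          inputMarginal]
    _ = _ := by
        simp only [term, infoRate, condDivergence, Finset.mul_sum, Finset.sum_sub_distrib]

lemma sum_mul_rpow_mul_div_rpow_neg (ht : 0 ≤ t) (hp : ∀ x, 0 ≤ p x) (hw : ∀ x y, 0 ≤ w x y)
    (hmass : 0 < tiltedMass t p w) :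
    ∑ x, ∑ y, (p x * w x y) ^ (1 + t) *
      (p x * (tiltedOutput t p w y / tiltedMass t p w)) ^ (-t) = tiltedMass t p w ^ (1 + t) := by
  have term (x : X) (y : Y) : (p x * w x y) ^ (1 + t) *
      (p x * (tiltedOutput t p w y / tiltedMass t p w)) ^ (-t) = tiltedMass t p w ^ t *
        (p x * w x y ^ (1 + t) * tiltedOutput t p w y ^ (-t)) := by
    have hu := tiltedOutput_nonneg (t := t) hp hw y
    rcases (hp x).eq_or_lt with h | h
    · simp [← h, Real.zero_rpow (by linarith : 1 + t ≠ 0)]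
    rw [Real.mul_rpow h.le (hw x y), Real.mul_rpow h.le (by positivity),
      Real.div_rpow hu hmass.le, Real.rpow_neg hmass.le, div_inv_eq_mul,
      Real.rpow_neg h.le, Real.rpow_add h, Real.rpow_one]
    field_simp
  simp only [term, ← Finset.mul_sum]
  rw [Finset.sum_comm]
  simp only [sum_mul_rpow_mul_tiltedOutput_rpow_neg ht hp hw]
  rw [add_comm, Real.rpow_add_one hmass.ne', tiltedMass]

end TiltedLaw

section Capacity

variable {X Y : Type*} [Fintype X] [Fintype Y] {W : X → Y → ℝ≥0∞} {P : X → ℝ≥0∞}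

lemma IsChannel.ne_top (hW : IsChannel W) (x : X) (y : Y) : W x y ≠ ⊤ :=
  IsDist.ne_top (hW x) y

lemma IsChannel.sum_toRealKernel (hW : IsChannel W) (x : X) : ∑ y, toRealKernel W x y = 1 :=
  IsDist.sum_toReal (hW x)

lemma renyiMI_joint_le (hW : IsChannel W) (α : ℝ≥0∞) (P : X → ℝ≥0∞) {Q : Y → ℝ≥0∞}
    (hQ : IsDist Q) :
    renyiMI α (joint P W) ≤ renyiD α (joint P W) fun z => P z.1 * Q z.2 := by
  refine (iInf_le _ ⟨Q, hQ⟩).trans_eq ?_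
  simp only [margX_joint hW]

lemma renyiMI_joint_le_logb_tiltedMass {t : ℝ} (ht : 0 < t) (hW : IsChannel W) (hP : IsDist P) :
    renyiMI (ENNReal.ofReal (1 + t)) (joint P W) ≤
      ((t⁻¹ * ((1 + t) *
        Real.logb 2 (tiltedMass t (fun x => (P x).toReal) (toRealKernel W))) : ℝ) : EReal) := by
  set p : X → ℝ := fun x => (P x).toReal
  set w := toRealKernel W
  have hp : ∀ x, 0 ≤ p x := fun _ => ENNReal.toReal_nonneg
  have hw : ∀ x y, 0 ≤ w x y := toRealKernel_nonneg W
  have hmass : 0 < tiltedMass t p w := tiltedMass_pos hp hw hP.sum_toReal hW.sum_toRealKernel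
  set q : Y → ℝ := fun y => tiltedOutput t p w y / tiltedMass t p w
  have hq : ∀ y, 0 ≤ q y := fun y => div_nonneg (tiltedOutput_nonneg hp hw y) hmass.le
  have hQ : IsDist fun y => ENNReal.ofReal (q y) :=
    isDist_ofReal hq ((Finset.sum_div ..).symm.trans (div_self hmass.ne'))
  have hsum : ∑ x, ∑ y, ((P x).toReal * (W x y).toReal) ^ (1 + t) * ((P x).toReal * q y) ^ (-t) =
      tiltedMass t p w ^ (1 + t) := sum_mul_rpow_mul_div_rpow_neg ht.le hp hw hmass
  refine (renyiMI_joint_le hW _ P hQ).trans_eq ?_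
  have hac : ∀ z : X × Y, joint P W z ≠ 0 → 0 ≤ -t ∨ P z.1 * ENNReal.ofReal (q z.2) ≠ 0 := by
    rintro ⟨x, y⟩ hz
    obtain ⟨hPx, hWxy⟩ := mul_ne_zero_iff.1 hz
    refine .inr (mul_ne_zero hPx (ENNReal.ofReal_pos.2 (div_pos ?_ hmass)).ne')
    exact tiltedOutput_pos hp hw (ENNReal.toReal_ne_zero.2 ⟨hPx, hP.ne_top x⟩)
      (ENNReal.toReal_ne_zero.2 ⟨hWxy, hW.ne_top x y⟩)
  rw [renyiD_ofReal (by linarith) (by linarith), add_sub_cancel_left, sub_add_cancel_left,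
    sum_rpow_mul_rpow_eq_ofReal (P := joint P W) (by linarith)
      (fun z => ENNReal.mul_ne_top (hP.ne_top z.1) (hW.ne_top z.1 z.2))
      (fun z => ENNReal.mul_ne_top (hP.ne_top z.1) ENNReal.ofReal_ne_top) hac,
    Fintype.sum_prod_type]
  simp only [joint, ENNReal.toReal_mul, ENNReal.toReal_ofReal (hq _)]
  rw [hsum, elog2_ofReal (by positivity),
    Real.logb_rpow_eq_mul_logb_of_pos hmass, ← EReal.coe_mul]

lemma exists_isJointLaw_of_lt_renyiCap {t a : ℝ} (ht : 0 < t) (hW : IsChannel W)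
    (ha : (a : EReal) < renyiCap (ENNReal.ofReal (1 + t)) W) :
    ∃ R, IsJointLaw (toRealKernel W) R ∧
      t * a < t * infoRate (toRealKernel W) R - condDivergence (toRealKernel W) R := by
  obtain ⟨⟨P, hP⟩, haP⟩ := lt_iSup_iff.1 ha
  have hp : ∀ x, 0 ≤ (P x).toReal := fun _ => ENNReal.toReal_nonneg
  have hw := toRealKernel_nonneg W
  have hmass := tiltedMass_pos (t := t) hp hw hP.sum_toReal hW.sum_toRealKernel
  refine ⟨_, isJointLaw_tiltedLaw ht.le hp hw hmass, lt_of_lt_of_le ?_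
    (one_add_mul_logb_tiltedMass_le ht.le hp hw hP.sum_toReal hmass)⟩
  rw [← lt_inv_mul_iff₀ ht]
  exact EReal.coe_lt_coe_iff.1 (haP.trans_le (renyiMI_joint_le_logb_tiltedMass ht hW hP))

lemma exists_isJointLaw_condDivergence_nonpos [Nonempty X] {w : X → Y → ℝ}
    (hw : ∀ x y, 0 ≤ w x y) (hwsum : ∀ x, ∑ y, w x y = 1) :
    ∃ R, IsJointLaw w R ∧ condDivergence w R ≤ 0 := by
  obtain ⟨x₀⟩ := ‹Nonempty X›
  set p : X → ℝ := Pi.single x₀ 1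
  have hp : ∀ x, 0 ≤ p x := fun x => (Pi.single_nonneg.2 zero_le_one : 0 ≤ p) x
  have hpsum : ∑ x, p x = 1 := by simp [p]
  have hmass : tiltedMass 0 p w = 1 := by
    simp only [tiltedMass, tiltedOutput, add_zero, inv_one, Real.rpow_one]
    rw [Finset.sum_comm]
    simp only [← Finset.mul_sum, hwsum, mul_one, hpsum]
  refine ⟨tiltedLaw 0 p w, isJointLaw_tiltedLaw le_rfl hp hw (hmass ▸ one_pos), ?_⟩
  have := one_add_mul_logb_tiltedMass_le le_rfl hp hw hpsum (hmass ▸ one_pos)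
  rw [hmass] at this
  simpa using this

/-- The law that draws the output in proportion to `maxₓ w x y` and pairs it with a maximizing
input has constant information density. -/
lemma exists_isJointLaw_infoRate_eq_logb_sum [Nonempty X] {w : X → Y → ℝ}
    (hw : ∀ x y, 0 ≤ w x y) (hwsum : ∀ x, ∑ y, w x y = 1) :
    ∃ (m : Y → ℝ) (R : X → Y → ℝ), (∀ x y, w x y ≤ m y) ∧ 0 < ∑ y, m y ∧ IsJointLaw w R ∧
      infoRate w R = Real.logb 2 (∑ y, m y) := by
  choose best hbest using fun y => Finite.exists_max fun x => w x y
  set S := ∑ y, w (best y) y with hS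
  have hSpos : 0 < S := by
    obtain ⟨x⟩ := ‹Nonempty X›
    exact zero_lt_one.trans_le ((hwsum x).ge.trans (Finset.sum_le_sum fun y _ => hbest y x))
  set R : X → Y → ℝ := fun x y => if x = best y then w x y / S else 0
  have houtput (y : Y) : outputMarginal R y = w (best y) y / S := by simp [outputMarginal, R]
  have hsum : ∑ x, ∑ y, R x y = 1 := by
    rw [Finset.sum_comm]
    simp [R, ← Finset.sum_div, ← hS, hSpos.ne']
  have hdensity (x : X) (y : Y) :
      R x y * Real.logb 2 (w x y / outputMarginal R y) = R x y * Real.logb 2 S := by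
    rw [houtput]
    by_cases hx : x = best y
    · rcases eq_or_ne (w x y) 0 with h | h
      · simp [R, h]
      · rw [← hx, div_div_cancel₀ h]
    · simp [R, hx]
  refine ⟨fun y => w (best y) y, R, fun x y => hbest y x, hSpos, ⟨fun x y => ?_, hsum, ?_⟩, ?_⟩
  · have := hw x y
    simp only [R]
    positivity
  · intro x y h
    simp [R, h]
  · simp only [infoRate, hdensity, ← Finset.sum_mul, hsum, one_mul, ← hS]

lemma exists_isJointLaw_lt_infoRate [Nonempty X] {r : ℝ} (hW : IsChannel W)
    (hr : (r : EReal) < renyiCap ⊤ W) :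
    ∃ R, IsJointLaw (toRealKernel W) R ∧ r < infoRate (toRealKernel W) R := by
  obtain ⟨m, R, hm, hS, hR, hrate⟩ :=
    exists_isJointLaw_infoRate_eq_logb_sum (toRealKernel_nonneg W) hW.sum_toRealKernel
  refine ⟨R, hR, ?_⟩
  set S := ∑ y, m y
  obtain ⟨⟨P, hP⟩, hrP⟩ := lt_iSup_iff.1 hr
  have hm₀ (y : Y) : 0 ≤ m y :=
    (toRealKernel_nonneg W _ y).trans (hm (Classical.arbitrary X) y)
  have hQ : IsDist fun y => ENNReal.ofReal (m y / S) :=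
    isDist_ofReal (fun y => div_nonneg (hm₀ y) hS.le)
      ((Finset.sum_div ..).symm.trans (div_self hS.ne'))
  have hdominated (z : X × Y) :
      joint P W z / (P z.1 * ENNReal.ofReal (m z.2 / S)) ≤ ENNReal.ofReal S := by
    refine ENNReal.div_le_of_le_mul ?_
    rw [mul_left_comm, ← ENNReal.ofReal_mul hS.le, mul_div_cancel₀ _ hS.ne', joint,
      ← ENNReal.ofReal_toReal (hW.ne_top z.1 z.2)]
    gcongr
    exact hm _ _
  rw [hrate, ← EReal.coe_lt_coe_iff, ← elog2_ofReal hS]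
  calc (r : EReal) < renyiMI ⊤ (joint P W) := hrP
    _ ≤ _ := renyiMI_joint_le hW ⊤ P hQ
    _ = elog2 (⨆ z : X × Y, joint P W z / (P z.1 * ENNReal.ofReal (m z.2 / S))) := by
        simp [renyiD]
    _ ≤ elog2 (ENNReal.ofReal S) := elog2_mono (iSup_le hdominated)

end Capacity

section Duality

variable {X Y : Type*} [Fintype X] [Fintype Y] {W : X → Y → ℝ≥0∞}

lemma sub_div_lt_of_mul_sub_lt {t r z : ℝ} {x : EReal} (ht : 0 < t)
    (h : (t : EReal) * (r - x) < z) : ((r - z / t : ℝ) : EReal) < x := by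
  induction x with
  | bot => simp [EReal.coe_mul_top_of_pos ht] at h
  | top => exact EReal.coe_lt_top _
  | coe x =>
    norm_cast at h ⊢
    rw [← lt_div_iff₀' ht] at h
    linarith

lemma exists_isJointLaw_condDivergence_sub_lt [Nonempty X] {r s z : ℝ} (hW : IsChannel W)
    (hr : (r : EReal) < renyiCap ⊤ W) (hs : 0 ≤ s) (hz : 0 < z)
    (hcap : ∀ t : ℝ, s ≤ t → 0 < t →
      (t : EReal) * (r - renyiCap (ENNReal.ofReal (1 + t)) W) < z) :
    ∃ R, IsJointLaw (toRealKernel W) R ∧ r < infoRate (toRealKernel W) R ∧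
      condDivergence (toRealKernel W) R - s * (infoRate (toRealKernel W) R - r) < z := by
  set w := toRealKernel W
  have hgain : ConcaveOn ℝ {R | IsJointLaw w R} fun R => infoRate w R - r :=
    (concaveOn_infoRate w).sub (convexOn_const r (concaveOn_infoRate w).1)
  have hcost : ConvexOn ℝ {R | IsJointLaw w R} fun R => condDivergence w R -
      s * (infoRate w R - r) :=
    (convexOn_condDivergence (toRealKernel_nonneg W)).sub (hgain.smul hs)
  have hlagrangian (τ : ℝ) (hτ : 0 ≤ τ) : ∃ R, IsJointLaw w R ∧
      condDivergence w R - s * (infoRate w R - r) - τ * (infoRate w R - r) < z := by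
    rcases (add_nonneg hs hτ).eq_or_lt with h | h
    · obtain ⟨R, hR, hD⟩ :=
        exists_isJointLaw_condDivergence_nonpos (toRealKernel_nonneg W) hW.sum_toRealKernel
      refine ⟨R, hR, ?_⟩
      linear_combination hD + hz + (infoRate w R - r) * h
    · obtain ⟨R, hR, hlt⟩ := exists_isJointLaw_of_lt_renyiCap h hW
        (sub_div_lt_of_mul_sub_lt h (hcap _ (le_add_of_nonneg_right hτ) h))
      rw [mul_sub, mul_div_cancel₀ _ h.ne'] at hlt
      exact ⟨R, hR, by linarith⟩
  obtain ⟨R₀, hR₀, hrate₀⟩ := exists_isJointLaw_lt_infoRate hW hr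
  obtain ⟨R, hR, hrate, hlt⟩ := exists_pos_and_lt_of_forall_lagrangian_lt hcost hgain hlagrangian
    ⟨R₀, hR₀, sub_pos.2 hrate₀⟩
  exact ⟨R, hR, sub_pos.1 hrate, hlt⟩

end Duality

section Converse

universe u

variable {X : Type*} {Y : Type u} [Fintype X] [Fintype Y] {W : X → Y → ℝ≥0∞} {α : ℝ≥0∞}
  {r s : ℝ}

lemma RateOK.eventually_le {c : ℕ → ℝ} (hc : RateOK r c) {δ : ℝ} (hδ : 0 < δ) :
    ∀ᶠ n : ℕ in atTop, c n ≤ n * (r + δ) := by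
  have hlim := eventually_lt_of_limsup_lt
    (hc.2.trans_lt (EReal.coe_lt_coe_iff.2 (lt_add_of_pos_right r hδ)))
  filter_upwards [hlim, eventually_gt_atTop 0] with n hn hn₀
  rw [EReal.coe_lt_coe_iff, div_lt_iff₀' (Nat.cast_pos.2 hn₀)] at hn
  exact hn.le

lemma neg_inv_mul_eLog2_le {n K E : ℝ} {x : EReal} (hn : 0 < n) (hK : 0 < K)
    (h : ((K * 2 ^ (-(n * E)) : ℝ) : EReal) ≤ x) :
    ((-1 / n : ℝ) : EReal) * eLog2 x ≤ ((E - Real.logb 2 K / n : ℝ) : EReal) := by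
  have hlog := coe_logb_le_eLog2 (by positivity) h
  rw [Real.logb_mul hK.ne' (by positivity), Real.logb_rpow two_pos one_lt_two.ne'] at hlog
  rw [neg_div, EReal.coe_neg, neg_mul, EReal.neg_le]
  refine le_trans (le_of_eq ?_)
    (mul_le_mul_of_nonneg_left hlog (EReal.coe_nonneg.2 (one_div_pos.2 hn).le))
  norm_cast
  field_simp
  ring

lemma Erf_le_of_eventually_le_simD {E δ K : ℝ} (hδ : 0 < δ) (hK : 0 < K)
    (h : ∀ᶠ n : ℕ in atTop, ∀ c : ℝ, c ≤ n * (r + δ) →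
      ((K * 2 ^ (-(n * E)) : ℝ) : EReal) ≤ simD α (prodCh n W) c) :
    Erf α W r ≤ E := by
  refine iSup_le fun ⟨c, hc⟩ => ?_
  have hbound : Tendsto (fun n : ℕ => ((E - Real.logb 2 K / n : ℝ) : EReal)) atTop (nhds E) := by
    refine EReal.tendsto_coe.2 ?_
    simpa using tendsto_const_nhds.sub (tendsto_const_div_atTop_nhds_zero_nat (Real.logb 2 K))
  rw [← hbound.liminf_eq]
  refine liminf_le_liminf ?_
  filter_upwards [h, hc.eventually_le hδ, eventually_gt_atTop 0] with n hn hcn hn₀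
  exact neg_inv_mul_eLog2_le (Nat.cast_pos.2 hn₀) hK (hn _ hcn)

lemma RenyiTestBound.le_renyiD {K D E κ μ n : ℝ} {P Q : Y → ℝ≥0∞} (h : RenyiTestBound α s K Y)
    (hK : 0 < K) (hn : 0 ≤ n) (hE : 0 ≤ E) (hDE : D - s * κ ≤ E)
    (hκ : 2 ^ (-(n * κ)) ≤ (1 / 2 : ℝ)) (hP : IsDist P) (hQ : IsDist Q)
    (hμ : μ = ratioMass (2 ^ (-(n * κ))) (fun y => (P y).toReal) (fun y => (Q y).toReal))
    (hμD : 2⁻¹ * 2 ^ (-(n * D)) ≤ μ) :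
    ((K * 2⁻¹ * 2 ^ (-(n * E)) : ℝ) : EReal) ≤ renyiD α P Q := by
  have hμ₀ : 0 < μ := lt_of_lt_of_le (by positivity) hμD
  refine le_trans ?_ (h (by positivity) hκ hP hQ (hμ ▸ hμ₀))
  rw [← hμ, EReal.coe_le_coe_iff, mul_assoc]
  refine mul_le_mul_of_nonneg_left (le_min ?_ ?_) hK.le
  · have : (2 : ℝ) ^ (-(n * E)) ≤ 1 :=
      Real.rpow_le_one_of_one_le_of_nonpos one_le_two (neg_nonpos.2 (mul_nonneg hn hE))
    linarith
  · calc (2⁻¹ * 2 ^ (-(n * E)) : ℝ) ≤ 2⁻¹ * 2 ^ (-(n * κ) * -s + -(n * D)) := by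
          gcongr
          · exact one_le_two
          · nlinarith
      _ = (2 ^ (-(n * κ))) ^ (-s) * (2⁻¹ * 2 ^ (-(n * D))) := by
          rw [Real.rpow_add two_pos, Real.rpow_mul zero_le_two, mul_left_comm]
      _ ≤ _ := by gcongr

lemma Erf_le_of_isJointLaw {E K : ℝ} {R : X → Y → ℝ} (hW : IsChannel W)
    (hR : IsJointLaw (toRealKernel W) R) (hr : r < infoRate (toRealKernel W) R) (hs : 0 ≤ s)
    (hE : 0 ≤ E)
    (hDE : condDivergence (toRealKernel W) R - s * (infoRate (toRealKernel W) R - r) < E)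
    (hK : 0 < K) (htest : ∀ n : ℕ, RenyiTestBound α s K (Fin n → Y)) :
    Erf α W r ≤ E := by
  set J := infoRate (toRealKernel W) R
  set D := condDivergence (toRealKernel W) R
  obtain ⟨δ, hδ, hδJ, hδE⟩ : ∃ δ, 0 < δ ∧ 3 * δ < J - r ∧ D + δ - s * (J - r - 3 * δ) ≤ E := by
    have hgap : 0 < E - (D - s * (J - r)) := sub_pos.2 hDE
    refine ⟨min ((J - r) / 6) ((E - (D - s * (J - r))) / (1 + 3 * s)),
      lt_min (by linarith) (div_pos hgap (by positivity)), ?_, ?_⟩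
    · linarith [min_le_left ((J - r) / 6) ((E - (D - s * (J - r))) / (1 + 3 * s))]
    · have := (le_div_iff₀ (by positivity)).1
        (min_le_right ((J - r) / 6) ((E - (D - s * (J - r))) / (1 + 3 * s)))
      linarith
  refine Erf_le_of_eventually_le_simD hδ (mul_pos hK (inv_pos.2 two_pos)) ?_
  filter_upwards [hR.eventually_exists_le_ratioMass_of_isSimulation r hδ,
    (tendsto_two_rpow_neg_mul (sub_pos.2 hδJ)).eventually_le_const one_half_pos]
    with n hmass hκ c hc
  refine le_iInf fun ⟨N, hN⟩ => ?_
  obtain ⟨xs, hxs⟩ := hmass c hc N hN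
  exact ((htest n).le_renyiD hK n.cast_nonneg hE hδE hκ (hW.prodCh n xs) (hN.isChannel xs) rfl
    hxs).trans (le_iSup (fun xs => renyiD α (prodCh n W xs) (N xs)) xs)

lemma Erf_le_of_forall_renyiCap [Nonempty X] {K : ℝ} {B : EReal} (hW : IsChannel W)
    (hr : (r : EReal) < renyiCap ⊤ W) (hs : 0 ≤ s) (hK : 0 < K)
    (htest : ∀ n : ℕ, RenyiTestBound α s K (Fin n → Y)) (hB : 0 ≤ B)
    (hcap : ∀ t : ℝ, s ≤ t → 0 < t →
      (t : EReal) * (r - renyiCap (ENNReal.ofReal (1 + t)) W) ≤ B) :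
    Erf α W r ≤ B := by
  refine EReal.le_of_forall_lt_iff_le.1 fun z hz => ?_
  have hz₀ : 0 < z := EReal.coe_pos.1 (hB.trans_lt hz)
  obtain ⟨R, hR, hrate, hDz⟩ := exists_isJointLaw_condDivergence_sub_lt hW hr hs hz₀
    fun t hst ht => (hcap t hst ht).trans_lt hz
  exact Erf_le_of_isJointLaw hW hR hrate hs hz₀.le hDz hK htest

lemma Erf_top_nonpos [Nonempty X] (hW : IsChannel W) (hr : (r : EReal) < renyiCap ⊤ W) :
    Erf ⊤ W r ≤ 0 := by
  obtain ⟨R, hR, hrate⟩ := exists_isJointLaw_lt_infoRate hW hr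
  set J := infoRate (toRealKernel W) R
  set D := condDivergence (toRealKernel W) R
  refine Erf_le_of_isJointLaw (s := (|D| + 1) / (J - r)) hW hR hrate ?_ le_rfl ?_ one_pos
    fun n => renyiTestBound_top _
  · have := sub_pos.2 hrate
    positivity
  · rw [div_mul_cancel₀ _ (sub_pos.2 hrate).ne']
    linarith [le_abs_self D]

lemma ofReal_one_add {t : ℝ} (ht : 0 ≤ t) : ENNReal.ofReal (1 + t) = 1 + ENNReal.ofReal t := by
  rw [ENNReal.ofReal_add zero_le_one ht, ENNReal.ofReal_one]

lemma exists_renyiTestBound_zero {a : ℝ} (ha₀ : 0 < a) (ha₁ : a ≤ 1) :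
    ∃ K, 0 < K ∧ ∀ (Y : Type u) [Fintype Y], RenyiTestBound (ENNReal.ofReal a) 0 K Y := by
  rcases ha₁.eq_or_lt with rfl | ha₁
  · simpa using exists_renyiTestBound_one
  · exact exists_renyiTestBound_of_lt_one ha₀ ha₁

lemma exists_renyiTestBound_of_pos {s : ℝ≥0} (hs : 0 < s) :
    ∃ K, 0 < K ∧ ∀ (Y : Type u) [Fintype Y], RenyiTestBound (1 + s) s K Y := by
  simpa only [ofReal_one_add s.coe_nonneg, ENNReal.ofReal_coe_nnreal] using
    exists_renyiTestBound_of_one_lt (NNReal.coe_pos.2 hs)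

end Converse

/-- **Converse bound for the reliability function** (Theorem 7).
For `0 ≤ r < I_∞(W)`: `E_rf^{(1+s)}(W,r) ≤ sup_{t ≥ 0} t(r - I_{1+t}(W))` for
`s ∈ (-1,0]`, and `E_rf^{(1+s)}(W,r) ≤ |sup_{t ≥ s} t(r - I_{1+t}(W))|⁺` for
`s ∈ (0,∞]`. -/
theorem reliability_function_converse
    {X Y : Type*} [Fintype X] [Fintype Y] [Nonempty X] [Nonempty Y]
    (W : X → Y → ℝ≥0∞) (hW : IsChannel W)
    (r : ℝ) (hr0 : 0 ≤ r) (hrI : (r : EReal) < renyiCap ⊤ W) :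
    (∀ s : ℝ, -1 < s → s ≤ 0 →
      Erf (ENNReal.ofReal (1 + s)) W r ≤
        ⨆ t : ℝ≥0∞, (t : EReal) * ((r : EReal) - renyiCap (1 + t) W)) ∧
    (∀ s : ℝ≥0∞, 0 < s →
      Erf (1 + s) W r ≤
        max (⨆ t : {t : ℝ≥0∞ // s ≤ t},
          (t.1 : EReal) * ((r : EReal) - renyiCap (1 + t.1) W)) 0) := by
  have hterm (t : ℝ) (ht : 0 < t) : (t : EReal) * (r - renyiCap (ENNReal.ofReal (1 + t)) W) =
      (ENNReal.ofReal t : ℝ≥0∞) * (r - renyiCap (1 + ENNReal.ofReal t) W) := by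
    rw [ofReal_one_add ht.le, EReal.coe_ennreal_ofReal, max_eq_left ht.le]
  refine ⟨fun s hs₁ hs₀ => ?_, fun s hs => ?_⟩
  · obtain ⟨K, hK, htest⟩ := exists_renyiTestBound_zero (a := 1 + s) (by linarith) (by linarith)
    refine Erf_le_of_forall_renyiCap hW hrI le_rfl hK (fun n => htest _)
      (le_iSup_of_le 0 (by simp)) fun t _ ht => ?_
    exact (hterm t ht).trans_le (le_iSup (fun t : ℝ≥0∞ => (t : EReal) * (r - renyiCap (1 + t) W)) _)
  · induction s with
    | top => exact le_max_of_le_right (by simpa using Erf_top_nonpos hW hrI)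
    | coe s =>
      obtain ⟨K, hK, htest⟩ := exists_renyiTestBound_of_pos (ENNReal.coe_pos.1 hs)
      refine Erf_le_of_forall_renyiCap hW hrI s.2 hK (fun n => htest _) (le_max_right _ _)
        fun t hst ht => le_max_of_le_left ?_
      exact (hterm t ht).trans_le
        (le_iSup_of_le ⟨.ofReal t, ENNReal.coe_le_coe.2 (NNReal.le_toNNReal_of_coe_le hst)⟩ le_rfl)

end RST
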